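/- arXiv:1612.06335 — 5 statements merged into one kernel-verified Lean document; each statement's English description precedes it below -/
import Mathlib

section
/- Let 0 < β < 1, γ = β/4, and K ≥ 2 an integer. For each n let G_n be a finite directed graph on N_n vertices in which every vertex has outdegree at most N_n·r_n, let M_n = 2^{γn}, and let ε_n ≥ 2^{−γn/2}. Assume: (i) (−log₂ r_n)/n → β as n → ∞; (ii) (log₂ N_n)/(n·log₂ K) → 1 as n → ∞; and (iii) M_n ≤ N_n for all n. Let a random vertex subset S_n ⊆ V(G_n) be chosen by including each vertex independently with probability M_n/N_n. Then for every c > 0 there exists n₀ such that for all n ≥ n₀, the probability that the number of vertices X ∈ S_n for which there exists Y ∈ S_n with a directed edge from Y to X in G_n exceeds ε_n·|S_n| is at most 2^{−cn}. -/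
/-!
Write `p = M/N`. Call `x ∈ S` bad if it has an in-neighbour in `S`. By an exponential Markov bound
(`subsetProb_card_lt`), `|S|` is at least `2s · 2 ^ (γn/2)` outside an event of doubly exponentially
small probability, and then more than `ε |S|` bad vertices means at least `2s` of them, for any
constant `s` fixed in advance.

If `S` has at least `2s` bad vertices, explore greedily from `W = ∅`: while `|W| < 2s` there is a bad
`x ∉ W` with an in-neighbour `y ∈ S`. Add `x` to `W`, and `y` too if it is not yet there. After `s`
steps this produces one of a family of witness sets contained in `S`
(`exists_witness_family`). A witness `W` lies in `S` with probability `p ^ |W|`, and each step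
multiplies the total weight of the family by at most `2s · M r + M² r`: there are at most `2s · N r`
ways to add the head of an edge with tail in `W`, at a cost `p`, and at most `N · N r` ways to add
both ends of an edge, at a cost `p²`. Only the outdegree bound enters, so large indegrees do no
harm. Since `M² r = 2 ^ (-(β/2 - o(1)) n)`, the union bound gives at most `2 ^ (-sβn/4)` for large
`n`, and `s` is chosen with `sβ/4 ≥ c + 1`.
-/

open scoped Classical

/-- The probability, under the product Bernoulli measure in which each vertex of
`Fin N` is included independently with probability `p`, that the random subset
satisfies the event `E`. -/
noncomputable def subsetProb (N : ℕ) (p : ℝ) (E : Finset (Fin N) → Prop) : ℝ :=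
  ∑ S : Finset (Fin N), if E S then p ^ S.card * (1 - p) ^ (N - S.card) else 0

/-- The probability that a Bernoulli subset contains `W` is `p ^ |W|`. -/
lemma sum_superset_weight (N : ℕ) (p : ℝ) (W : Finset (Fin N)) :
    ∑ S : Finset (Fin N), (if W ⊆ S then p ^ S.card * (1 - p) ^ (N - S.card) else 0)
      = p ^ W.card := by
  -- Expand `∏ i, (p + g i)`, where `g` vanishes on `W` and is `1 - p` off `W`.
  have h := Finset.prod_add (fun _ : Fin N => p) (fun i => if i ∈ W then 0 else 1 - p)
    Finset.univ
  have hl : ∏ i : Fin N, (p + if i ∈ W then 0 else 1 - p) = p ^ W.card := by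
    have : ∀ i : Fin N, (p + if i ∈ W then 0 else 1 - p) = if i ∈ W then p else 1 := by
      intro i; split_ifs <;> ring
    simp only [this]
    rw [Finset.prod_ite_mem]
    simp
  rw [hl] at h
  rw [h, Finset.powerset_univ]
  refine Finset.sum_congr rfl fun S _ => ?_
  rw [Finset.prod_const]
  split_ifs with hWS
  · congr 1
    have : ∀ i ∈ Finset.univ \ S, (if i ∈ W then (0 : ℝ) else 1 - p) = 1 - p := by
      intro i hi
      rw [if_neg]
      intro hiW
      exact (Finset.mem_sdiff.1 hi).2 (hWS hiW)
    rw [Finset.prod_congr rfl this, Finset.prod_const, Finset.card_univ_sdiff]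
    simp
  · obtain ⟨i, hiW, hiS⟩ := Finset.not_subset.1 hWS
    rw [Finset.prod_eq_zero (i := i) (by simp [hiS]) (by simp [hiW]), mul_zero]

lemma weight_nonneg {N : ℕ} {p : ℝ} (hp0 : 0 ≤ p) (hp1 : p ≤ 1) (S : Finset (Fin N)) :
    0 ≤ p ^ S.card * (1 - p) ^ (N - S.card) :=
  mul_nonneg (pow_nonneg hp0 _) (pow_nonneg (sub_nonneg.2 hp1) _)

lemma subsetProb_le_of_imp_or {N : ℕ} {p : ℝ} (hp0 : 0 ≤ p) (hp1 : p ≤ 1)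
    {E A B : Finset (Fin N) → Prop} (h : ∀ S, E S → A S ∨ B S) :
    subsetProb N p E ≤ subsetProb N p A + subsetProb N p B := by
  unfold subsetProb
  rw [← Finset.sum_add_distrib]
  refine Finset.sum_le_sum fun S _ => ?_
  have hw := weight_nonneg hp0 hp1 S
  have := h S
  split_ifs <;> first | linarith | (exfalso; tauto)

/-- Union bound: the subset contains some member of `T` with probability at most
`∑ W ∈ T, p ^ |W|`. -/
lemma subsetProb_le_sum {N : ℕ} {p : ℝ} (hp0 : 0 ≤ p) (hp1 : p ≤ 1)
    {E : Finset (Fin N) → Prop} (T : Finset (Finset (Fin N)))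
    (h : ∀ S, E S → ∃ W ∈ T, W ⊆ S) :
    subsetProb N p E ≤ ∑ W ∈ T, p ^ W.card := by
  rw [Finset.sum_congr rfl fun W _ => (sum_superset_weight N p W).symm]
  rw [Finset.sum_comm]
  refine Finset.sum_le_sum fun S _ => ?_
  have hw := weight_nonneg hp0 hp1 S
  have hnn : ∀ W ∈ T, 0 ≤ if W ⊆ S then p ^ S.card * (1 - p) ^ (N - S.card) else 0 := by
    intro W _
    split_ifs
    exacts [hw, le_rfl]
  split_ifs with hE
  · obtain ⟨W, hWT, hWS⟩ := h S hE
    refine le_trans ?_ (Finset.single_le_sum hnn hWT)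
    rw [if_pos hWS]
  · exact Finset.sum_nonneg hnn

/-- Exponential Markov bound for the lower tail of `|S|`, from
`E[2 ^ (-|S|)] = (1 - p / 2) ^ N ≤ exp (-p N / 2)`. -/
lemma subsetProb_card_lt {N : ℕ} {p : ℝ} (hp0 : 0 ≤ p) (hp1 : p ≤ 1) (a : ℝ) :
    subsetProb N p (fun S => (S.card : ℝ) < a) ≤ 2 ^ a * Real.exp (-(p * N / 2)) := by
  have h1 : subsetProb N p (fun S => (S.card : ℝ) < a) ≤
      ∑ S : Finset (Fin N), 2 ^ a * ((p / 2) ^ S.card * (1 - p) ^ (N - S.card)) := by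
    refine Finset.sum_le_sum fun S _ => ?_
    have hw := weight_nonneg hp0 hp1 S
    have heq : (2 : ℝ) ^ a * ((p / 2) ^ S.card * (1 - p) ^ (N - S.card))
        = (2 : ℝ) ^ (a - S.card) * (p ^ S.card * (1 - p) ^ (N - S.card)) := by
      rw [Real.rpow_sub two_pos, Real.rpow_natCast, div_pow]
      ring
    rw [heq]
    split_ifs with h
    · exact le_mul_of_one_le_left hw (Real.one_le_rpow one_le_two (by linarith))
    · positivity
  refine h1.trans ?_
  rw [← Finset.mul_sum]
  have h2 := Fintype.sum_pow_mul_eq_add_pow (Fin N) (p / 2) (1 - p)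
  rw [Fintype.card_fin] at h2
  rw [h2]
  gcongr
  have h3 : p / 2 + (1 - p) ≤ Real.exp (-(p / 2)) := by
    have := Real.add_one_le_exp (-(p / 2))
    linarith
  calc (p / 2 + (1 - p)) ^ N ≤ (Real.exp (-(p / 2))) ^ N :=
        pow_le_pow_left₀ (by linarith) h3 N
    _ = Real.exp (-(p * N / 2)) := by
        rw [← Real.exp_nat_mul]
        ring_nf

/-- One step of the greedy exploration: the sets obtained from `W` by adding either the head of
an edge with tail in `W`, or both ends of an edge disjoint from `W`. -/
noncomputable def edgeExtensions {N : ℕ} (D : Fin N → Fin N → Prop) (W : Finset (Fin N)) :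
    Finset (Finset (Fin N)) :=
  ((W.sigma fun y => Finset.univ.filter fun x => D y x ∧ x ∉ W).image
      fun e => insert e.2 W) ∪
  (((Finset.univ.filter fun y => y ∉ W).sigma
      fun y => Finset.univ.filter fun x => D y x ∧ x ∉ W ∧ x ≠ y).image
      fun e => insert e.2 (insert e.1 W))

lemma card_edgeExtensions_le {N : ℕ} {D : Fin N → Fin N → Prop} {W W' : Finset (Fin N)}
    (h : W' ∈ edgeExtensions D W) : W'.card ≤ W.card + 2 := by
  unfold edgeExtensions at h
  rcases Finset.mem_union.1 h with h | h
  · obtain ⟨e, -, rfl⟩ := Finset.mem_image.1 h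
    have := Finset.card_insert_le e.2 W
    omega
  · obtain ⟨e, -, rfl⟩ := Finset.mem_image.1 h
    have := Finset.card_insert_le e.2 (insert e.1 W)
    have := Finset.card_insert_le e.1 W
    omega

lemma card_sigma_le_card_mul {N : ℕ} {D : Fin N → Fin N → Prop} {d : ℝ}
    (hdeg : ∀ v, ((Finset.univ.filter fun w => D v w).card : ℝ) ≤ d)
    (A : Finset (Fin N)) (F : Fin N → Finset (Fin N)) (hF : ∀ y, ∀ x ∈ F y, D y x) :
    ((A.sigma F).card : ℝ) ≤ A.card * d := by
  rw [Finset.card_sigma, Nat.cast_sum, ← nsmul_eq_mul]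
  refine Finset.sum_le_card_nsmul _ _ _ fun y _ => le_trans ?_ (hdeg y)
  exact_mod_cast Finset.card_le_card fun x hx => by simpa using hF y x hx

/-- A family of sets of equal weight: the number of sets is at most the number of indices. -/
lemma sum_image_le_card_mul {α : Type} {N : ℕ} {p : ℝ} (hp0 : 0 ≤ p) (A : Finset α)
    (f : α → Finset (Fin N)) (m : ℕ) (h : ∀ e ∈ A, (f e).card = m) :
    ∑ W ∈ A.image f, p ^ W.card ≤ A.card * p ^ m := by
  have h1 : ∑ W ∈ A.image f, p ^ W.card = ∑ W ∈ A.image f, p ^ m := by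
    refine Finset.sum_congr rfl fun W hW => ?_
    obtain ⟨e, he, rfl⟩ := Finset.mem_image.1 hW
    rw [h e he]
  rw [h1, Finset.sum_const, nsmul_eq_mul]
  have : ((A.image f).card : ℝ) ≤ A.card := by exact_mod_cast Finset.card_image_le
  gcongr

lemma sum_union_pow_card_le {N : ℕ} {p : ℝ} (hp0 : 0 ≤ p) (A B : Finset (Finset (Fin N))) :
    ∑ W ∈ A ∪ B, p ^ W.card ≤ ∑ W ∈ A, p ^ W.card + ∑ W ∈ B, p ^ W.card := by
  rw [← Finset.sum_union_inter]
  exact le_add_of_nonneg_right (Finset.sum_nonneg fun _ _ => pow_nonneg hp0 _)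

/-- One exploration step multiplies the total weight by at most the bound
`p * d` (one new vertex) for each tail in `W`, plus `(p * N) * (p * d)` (two new vertices). -/
lemma sum_edgeExtensions_le {N : ℕ} {p d : ℝ} (hp0 : 0 ≤ p) (hd : 0 ≤ d)
    {D : Fin N → Fin N → Prop}
    (hdeg : ∀ v, ((Finset.univ.filter fun w => D v w).card : ℝ) ≤ d)
    (W : Finset (Fin N)) :
    ∑ W' ∈ edgeExtensions D W, p ^ W'.card
      ≤ p ^ W.card * (W.card * (p * d) + (p * N) * (p * d)) := by
  unfold edgeExtensions
  refine (sum_union_pow_card_le hp0 _ _).trans ?_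
  have hA := sum_image_le_card_mul hp0
    (W.sigma fun y => Finset.univ.filter fun x => D y x ∧ x ∉ W)
    (fun e => insert e.2 W) (W.card + 1) (by
      intro e he
      simp only [Finset.mem_sigma, Finset.mem_filter, Finset.mem_univ, true_and] at he
      exact Finset.card_insert_of_notMem he.2.2)
  have hC := sum_image_le_card_mul hp0
    ((Finset.univ.filter fun y => y ∉ W).sigma
      fun y => Finset.univ.filter fun x => D y x ∧ x ∉ W ∧ x ≠ y)
    (fun e => insert e.2 (insert e.1 W)) (W.card + 2) (by
      intro e he
      simp only [Finset.mem_sigma, Finset.mem_filter, Finset.mem_univ, true_and] at he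
      rw [Finset.card_insert_of_notMem, Finset.card_insert_of_notMem he.1]
      simp [he.2.2.1, he.2.2.2])
  have hA' := card_sigma_le_card_mul hdeg W
    (fun y => Finset.univ.filter fun x => D y x ∧ x ∉ W)
    fun _ _ h => (Finset.mem_filter.1 h).2.1
  have hC' := card_sigma_le_card_mul hdeg (Finset.univ.filter fun y => y ∉ W)
    (fun y => Finset.univ.filter fun x => D y x ∧ x ∉ W ∧ x ≠ y)
    fun _ _ h => (Finset.mem_filter.1 h).2.1
  have hC'' : ((Finset.univ.filter fun y => y ∉ W).card : ℝ) ≤ N := by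
    have := Finset.card_le_univ (Finset.univ.filter fun y : Fin N => y ∉ W)
    rw [Fintype.card_fin] at this
    exact_mod_cast this
  calc _ ≤ (W.card * d) * p ^ (W.card + 1) + (N * d) * p ^ (W.card + 2) := by
        refine add_le_add (hA.trans ?_) (hC.trans ?_)
        · gcongr
        · refine mul_le_mul_of_nonneg_right (hC'.trans ?_) (by positivity)
          gcongr
    _ = _ := by ring

/-- A set `S` with more than `|W|` vertices having an in-neighbour in `S` allows an exploration
step from any `W ⊆ S`. -/
lemma exists_edgeExtension_subset {N : ℕ} {D : Fin N → Fin N → Prop} (hirr : ∀ v, ¬ D v v)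
    {S W : Finset (Fin N)} (hWS : W ⊆ S)
    (h : W.card < (S.filter fun x => ∃ y ∈ S, D y x).card) :
    ∃ W' ∈ edgeExtensions D W, W' ⊆ S := by
  obtain ⟨x, hx, hxW⟩ := Finset.exists_mem_notMem_of_card_lt_card h
  obtain ⟨hxS, y, hyS, hyx⟩ := Finset.mem_filter.1 hx
  unfold edgeExtensions
  by_cases hyW : y ∈ W
  · refine ⟨insert x W, Finset.mem_union_left _ (Finset.mem_image.2 ⟨⟨y, x⟩, ?_, rfl⟩),
      Finset.insert_subset hxS hWS⟩
    simp [hyW, hyx, hxW]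
  · refine ⟨insert x (insert y W), Finset.mem_union_right _
      (Finset.mem_image.2 ⟨⟨y, x⟩, ?_, rfl⟩),
      Finset.insert_subset hxS (Finset.insert_subset hyS hWS)⟩
    have hne : x ≠ y := fun h => hirr y (h ▸ hyx)
    simp [hyW, hyx, hxW, hne]

lemma sum_biUnion_pow_card_le {N : ℕ} {p : ℝ} (hp0 : 0 ≤ p) (T : Finset (Finset (Fin N)))
    (f : Finset (Fin N) → Finset (Finset (Fin N))) :
    ∑ W' ∈ T.biUnion f, p ^ W'.card ≤ ∑ W ∈ T, ∑ W' ∈ f W, p ^ W'.card := by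
  induction T using Finset.induction_on with
  | empty => simp
  | insert W T hW ih =>
    rw [Finset.biUnion_insert, Finset.sum_insert hW]
    exact (sum_union_pow_card_le hp0 _ _).trans (by gcongr)

/-- The family of outcomes of `k` exploration steps started from the empty set: each outcome has
at most `2 * k` vertices, every step costs a factor at most `q`, and every `S` with at least
`2 * k` vertices having an in-neighbour in `S` contains an outcome. -/
lemma exists_witness_family {N : ℕ} {p d q : ℝ} (hp0 : 0 ≤ p) (hd : 0 ≤ d)
    {D : Fin N → Fin N → Prop} (hirr : ∀ v, ¬ D v v)
    (hdeg : ∀ v, ((Finset.univ.filter fun w => D v w).card : ℝ) ≤ d) (s : ℕ)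
    (hq : 2 * s * (p * d) + (p * N) * (p * d) ≤ q) (k : ℕ) (hk : k ≤ s) :
    ∃ T : Finset (Finset (Fin N)), (∀ W ∈ T, W.card ≤ 2 * k) ∧
      ∑ W ∈ T, p ^ W.card ≤ q ^ k ∧
      ∀ S : Finset (Fin N), 2 * k ≤ (S.filter fun x => ∃ y ∈ S, D y x).card →
        ∃ W ∈ T, W ⊆ S := by
  induction k with
  | zero => exact ⟨{∅}, by simp, by simp, by simp⟩
  | succ k ih =>
    obtain ⟨T, hT1, hT2, hT3⟩ := ih (by omega)
    have hq0 : 0 ≤ q := le_trans (by positivity) hq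
    refine ⟨T.biUnion (edgeExtensions D), ?_, ?_, ?_⟩
    · intro W' hW'
      obtain ⟨W, hW, hW'⟩ := Finset.mem_biUnion.1 hW'
      have := card_edgeExtensions_le hW'
      have := hT1 W hW
      omega
    · calc ∑ W' ∈ T.biUnion (edgeExtensions D), p ^ W'.card
          ≤ ∑ W ∈ T, ∑ W' ∈ edgeExtensions D W, p ^ W'.card :=
            sum_biUnion_pow_card_le hp0 T _
        _ ≤ ∑ W ∈ T, p ^ W.card * q := by
            refine Finset.sum_le_sum fun W hW =>
              (sum_edgeExtensions_le hp0 hd hdeg W).trans ?_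
            have h2 : (W.card : ℝ) ≤ 2 * s := by
              have := hT1 W hW
              exact_mod_cast (by omega : W.card ≤ 2 * s)
            refine mul_le_mul_of_nonneg_left (le_trans ?_ hq) (by positivity)
            gcongr
        _ ≤ q ^ (k + 1) := by
            rw [← Finset.sum_mul, pow_succ]
            gcongr
    · intro S hS
      obtain ⟨W, hW, hWS⟩ := hT3 S (by omega)
      have := hT1 W hW
      obtain ⟨W', hW', hS'⟩ := exists_edgeExtension_subset hirr hWS (by omega)
      exact ⟨W', Finset.mem_biUnion.2 ⟨W, hW, hW'⟩, hS'⟩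

/-- Finite form of the theorem: apart from the lower tail of `|S|`, the event is bounded by the
weight of the witnesses after `s` exploration steps. -/
lemma subsetProb_le_of_finite {N : ℕ} {p d q a e : ℝ} (hp0 : 0 ≤ p) (hp1 : p ≤ 1) (hd : 0 ≤ d)
    {D : Fin N → Fin N → Prop} (hirr : ∀ v, ¬ D v v)
    (hdeg : ∀ v, ((Finset.univ.filter fun w => D v w).card : ℝ) ≤ d) (s : ℕ)
    (hq : 2 * s * (p * d) + (p * N) * (p * d) ≤ q) (he : 0 ≤ e) (hea : 2 * s ≤ e * a) :
    subsetProb N p (fun S => e * S.card < ((S.filter fun x => ∃ y ∈ S, D y x).card : ℝ))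
      ≤ 2 ^ a * Real.exp (-(p * N / 2)) + q ^ s := by
  obtain ⟨T, -, hT2, hT3⟩ := exists_witness_family hp0 hd hirr hdeg s hq s le_rfl
  refine (subsetProb_le_of_imp_or hp0 hp1 (A := fun S => (S.card : ℝ) < a)
    (B := fun S => 2 * s ≤ (S.filter fun x => ∃ y ∈ S, D y x).card) fun S hS => ?_).trans
    (add_le_add (subsetProb_card_lt hp0 hp1 a) ((subsetProb_le_sum hp0 hp1 T hT3).trans hT2))
  by_cases hSa : (S.card : ℝ) < a
  · exact Or.inl hSa
  · right
    have h1 : e * a ≤ e * S.card := mul_le_mul_of_nonneg_left (not_lt.1 hSa) he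
    exact_mod_cast (hea.trans (h1.trans hS.le))

/-- Exponentials `2 ^ (b n)` with `b > 0` eventually dominate affine functions of `n`. -/
lemma eventually_affine_le_two_rpow {b : ℝ} (hb : 0 < b) (u v : ℝ) :
    ∀ᶠ n : ℕ in Filter.atTop, u * n + v ≤ (2 : ℝ) ^ (b * (n : ℝ)) := by
  have hlog : 0 < Real.log 2 * b := mul_pos (Real.log_pos one_lt_two) hb
  have h := (isLittleO_pow_exp_pos_mul_atTop 1 hlog).comp_tendsto
    (tendsto_natCast_atTop_atTop (R := ℝ))
  have h' := h.def (c := 1 / (|u| + |v| + 1)) (by positivity)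
  filter_upwards [h', Filter.eventually_ge_atTop 1] with n hn hn1
  have hn1' : (1 : ℝ) ≤ n := by exact_mod_cast hn1
  simp only [Function.comp, pow_one, Real.norm_eq_abs, Real.abs_exp, Nat.abs_cast] at hn
  have he : Real.exp (Real.log 2 * b * n) = (2 : ℝ) ^ (b * (n : ℝ)) := by
    rw [Real.rpow_def_of_pos two_pos]
    ring_nf
  rw [he, one_div, inv_mul_eq_div, le_div_iff₀ (by positivity)] at hn
  have h1 : u * n ≤ |u| * n := by gcongr; exact le_abs_self u
  have h2 : v ≤ |v| * n := (le_abs_self v).trans (le_mul_of_one_le_right (abs_nonneg v) hn1')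
  nlinarith

/-- If a sequence of loopless directed graphs `D_n` on `N_n = K^{(1−o(1))n}` vertices
has maximum outdegree at most `N_n·r_n` with `r_n = 2^{−(β−o(1))n}`, and a random
subset `S_n` is chosen by including each vertex independently with probability
`M_n/N_n` where `M_n = 2^{γn}`, `γ = β/4`, then for `ε_n ≥ 2^{−γn/2}` the probability
that more than `ε_n·|S_n|` vertices `X ∈ S_n` have an in-neighbor in `S_n` is
`2^{−ω(n)}`. -/
theorem sparse_directed_subgraph_whp (β : ℝ) (hβ0 : 0 < β) (hβ1 : β < 1)
    (γ : ℝ) (hγ : γ = β / 4) (K : ℕ) (hK : 2 ≤ K)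
    (N : ℕ → ℕ) (hN : ∀ n, 0 < N n)
    (D : ∀ n, Fin (N n) → Fin (N n) → Prop)
    (hirr : ∀ n, ∀ v : Fin (N n), ¬ D n v v)
    (r : ℕ → ℝ) (hr : ∀ n, 0 < r n)
    (ε : ℕ → ℝ) (hεlb : ∀ n : ℕ, (2 : ℝ) ^ (-γ * (n : ℝ) / 2) ≤ ε n)
    (M : ℕ → ℝ) (hM : ∀ n, M n = 2 ^ (γ * n))
    (hdeg : ∀ n, ∀ v : Fin (N n),
      ((Finset.univ.filter (fun w => D n v w)).card : ℝ) ≤ (N n : ℝ) * r n)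
    (h1 : Filter.Tendsto (fun n => -Real.logb 2 (r n) / n) Filter.atTop (nhds β))
    (h2 : Filter.Tendsto (fun n => Real.logb 2 (N n) / (n * Real.logb 2 K))
      Filter.atTop (nhds 1))
    (h3 : ∀ n, M n ≤ (N n : ℝ)) :
    ∀ c : ℝ, 0 < c → ∃ n₀ : ℕ, ∀ n ≥ n₀,
      subsetProb (N n) (M n / N n)
        (fun S => ε n * S.card <
          ((S.filter (fun x => ∃ y ∈ S, D n y x)).card : ℝ))
        ≤ 2 ^ (-c * n) := by
  intro c hc
  have hγ0 : 0 < γ / 2 := by rw [hγ]; positivity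
  obtain ⟨s, hs⟩ := exists_nat_ge (4 * (c + 1) / β)
  have hs' : c + 1 ≤ s * (β / 4) := by
    rw [div_le_iff₀ hβ0] at hs
    linarith
  have hev := ((h1.eventually (lt_mem_nhds (show 7 * β / 8 < β by linarith))).and
    (eventually_affine_le_two_rpow (show 0 < β / 8 by positivity) 0 (2 * s + 1))).and
    ((eventually_affine_le_two_rpow hγ0 (c + 1) 0).and
    ((eventually_affine_le_two_rpow hγ0 0 (2 * (2 * s + 1))).and
    (Filter.eventually_ge_atTop 1)))
  obtain ⟨n₀, hn₀⟩ := Filter.eventually_atTop.1 hev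
  refine ⟨n₀, fun n hn => ?_⟩
  obtain ⟨⟨e1, e2⟩, e3, e4, e5⟩ := hn₀ n hn
  have hn1 : (1 : ℝ) ≤ n := by exact_mod_cast e5
  have hn0 : (0 : ℝ) < n := by linarith
  have hNpos : (0 : ℝ) < N n := by exact_mod_cast hN n
  have hMpos : 0 < M n := by rw [hM]; positivity
  have hM1 : 1 ≤ M n := by
    rw [hM]
    exact Real.one_le_rpow one_le_two (by nlinarith)
  have hp0 : 0 ≤ M n / N n := by positivity
  have hp1 : M n / N n ≤ 1 := (div_le_one hNpos).2 (h3 n)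
  have hpN : M n / N n * N n = M n := div_mul_cancel₀ _ hNpos.ne'
  have hpd : M n / N n * (N n * r n) = M n * r n := by rw [← mul_assoc, hpN]
  have hr' : r n ≤ (2 : ℝ) ^ (-(7 * β / 8 * n)) := by
    rw [lt_div_iff₀ hn0] at e1
    exact (Real.logb_le_iff_le_rpow one_lt_two (hr n)).1 (by linarith)
  set z : ℝ := 2 ^ (γ / 2 * (n : ℝ)) with hz
  have hz0 : 0 < z := by positivity
  have hMz : M n = z * z := by
    rw [hM, hz, ← Real.rpow_add two_pos]
    ring_nf
  have hεz : 1 ≤ ε n * z := by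
    have : (2 : ℝ) ^ (-γ * (n : ℝ) / 2) * z = 1 := by
      rw [hz, ← Real.rpow_add two_pos]
      ring_nf
      exact Real.rpow_zero 2
    rw [← this]
    exact mul_le_mul_of_nonneg_right (hεlb n) hz0.le
  have hε0 : 0 ≤ ε n := le_trans (by positivity) (hεlb n)
  -- `M² r ≤ 2 ^ (-3βn/8)`, and the factor `2s + 1` is absorbed into `2 ^ (βn/8)`.
  have hq : 2 * s * (M n / N n * (N n * r n)) + (M n / N n * N n) * (M n / N n * (N n * r n))
      ≤ (2 : ℝ) ^ (-(β / 4 * n)) := by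
    rw [hpd, hpN]
    have hrn := hr n
    calc 2 * s * (M n * r n) + M n * (M n * r n)
        ≤ 2 * s * (M n * (M n * r n)) + M n * (M n * r n) := by
          gcongr
          exact le_mul_of_one_le_left (by positivity) hM1
      _ = (2 * s + 1) * (M n * (M n * r n)) := by ring
      _ ≤ (2 : ℝ) ^ (β / 8 * (n : ℝ)) * (M n * (M n * (2 : ℝ) ^ (-(7 * β / 8 * n)))) := by
          gcongr
          linarith
      _ = (2 : ℝ) ^ (-(β / 4 * n)) := by
          rw [hM, hγ, ← Real.rpow_add two_pos, ← Real.rpow_add two_pos,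
            ← Real.rpow_add two_pos]
          ring_nf
  have hmain := subsetProb_le_of_finite hp0 hp1 (mul_nonneg hNpos.le (hr n).le) (hirr n)
    (hdeg n) s hq hε0 (a := 2 * s * z) (by nlinarith [(Nat.cast_nonneg s : (0 : ℝ) ≤ s)])
  refine hmain.trans ?_
  have hA : (2 : ℝ) ^ (2 * s * z) * Real.exp (-(M n / N n * N n / 2))
      ≤ (2 : ℝ) ^ (-(c + 1) * n) := by
    rw [hpN, hMz]
    have hexp : Real.exp (-(z * z / 2)) ≤ (2 : ℝ) ^ (-(z * z / 2)) := by
      rw [Real.rpow_def_of_pos two_pos]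
      have := Real.log_two_lt_d9
      apply Real.exp_le_exp.2
      nlinarith [mul_pos hz0 hz0]
    calc _ ≤ (2 : ℝ) ^ (2 * s * z) * (2 : ℝ) ^ (-(z * z / 2)) := by gcongr
      _ = (2 : ℝ) ^ (2 * s * z + -(z * z / 2)) := (Real.rpow_add two_pos _ _).symm
      _ ≤ _ := by
        apply Real.rpow_le_rpow_of_exponent_le one_le_two
        nlinarith
  have hB : ((2 : ℝ) ^ (-(β / 4 * n))) ^ s ≤ (2 : ℝ) ^ (-(c + 1) * n) := by
    rw [← Real.rpow_natCast, ← Real.rpow_mul two_pos.le]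
    apply Real.rpow_le_rpow_of_exponent_le one_le_two
    nlinarith
  calc _ ≤ (2 : ℝ) ^ (-(c + 1) * n) + (2 : ℝ) ^ (-(c + 1) * n) := add_le_add hA hB
    _ = (2 : ℝ) ^ (1 + -(c + 1) * n) := by
        rw [Real.rpow_add two_pos, Real.rpow_one]
        ring
    _ ≤ _ := by
        apply Real.rpow_le_rpow_of_exponent_le one_le_two
        linarith
end

section
/- The adversarial zero-rate threshold p0_adv equals 1/2 if and only if the deterministic zero-rate threshold for online deletions p0_on,d equals 1/2. -/
/-!
The inclusion "adversarially good implies online good" is immediate: decode to any codeword that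
contains the received word as a subsequence. Every `p > 1/2` is online bad: half of the code has a
common majority bit `b`, and the channel reduces all these words to the same word `b ^ ⌈n/2⌉`.
Hence `p0adv ≤ p0ond ≤ 1/2`, and the content of the theorem is that `p0ond < 1/2` as soon as
`p0adv < 1/2` (`not_onGood_of_not_advGood`).

Suppose that `q < 1/2` is adversarially bad, and cut words of length `n` in the middle. After
passing to a quarter of the code, all prefixes have a common majority bit `b₁` and all suffixes have
a common majority bit `b₂`.

* If at least half of the remaining words share their prefix with another one, the channel transmits
  the prefix and replaces the suffix by a fixed power of `b₂`. This costs about `n/4` deletions and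
  confuses all those words.
* Otherwise at least half of the remaining words are determined by their prefix, so after the prefix
  the channel knows the future. It replaces the prefix by a fixed power of `b₁`. As `q` is
  adversarially bad, nearly all the suffixes can be paired so that paired ones have a common
  subsequence of length at least `(1 - q)n/2` (`exists_pairing`); the channel outputs this
  subsequence. The cost is about `(1/2 + q)n/2`.

In both cases a positive fraction of the code is grouped into words with equal outputs, which
forces a constant fraction of decoding errors (`exists_attack`).
-/

open scoped Classical

/-- `advGood p` : there is a rate `δ > 0` such that for infinitely many `n` there is a
code `C ⊆ {0,1}^n` of size at least `2^{δn}` in which every two distinct codewords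
have longest common subsequence of length less than `(1−p)n`. -/
def advGood (p : ℝ) : Prop :=
  ∃ δ : ℝ, 0 < δ ∧ ∀ n₀ : ℕ, ∃ n ≥ n₀, ∃ C : Finset (List Bool),
    (∀ c ∈ C, c.length = n) ∧ (C.card : ℝ) ≥ 2 ^ (δ * n) ∧
    ∀ x ∈ C, ∀ y ∈ C, x ≠ y →
      ∀ z : List Bool, z.Sublist x → z.Sublist y → (z.length : ℝ) < (1 - p) * n

/-- The zero-rate threshold for adversarial deletions. -/
noncomputable def p0adv : ℝ := sSup {p : ℝ | p ∈ Set.Icc (0 : ℝ) 1 ∧ advGood p}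

/-- The output of the deterministic online deletion channel described by `f` on input
`x`: bit `x_i` is transmitted iff `f` applied to the prefix `x_1…x_i` returns `true`. -/
def onlineOutput (f : List Bool → Bool) (x : List Bool) : List Bool :=
  (List.range x.length).filterMap
    (fun i => if f (x.take (i + 1)) then some (x.getD i false) else none)

/-- The online channel `f` deletes at most `pn` bits on every input of length `n`. -/
def deletesAtMost (f : List Bool → Bool) (n : ℕ) (p : ℝ) : Prop :=
  ∀ x : List Bool, x.length = n → ((n - (onlineOutput f x).length : ℕ) : ℝ) ≤ p * n

/-- `onGood p` : there is a rate `δ > 0` such that for every `ε > 0` there are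
infinitely many `n` admitting a code `C ⊆ {0,1}^n` of size at least `2^{δn}` and a
decoder `Dec` into `C` such that every deterministic online deletion channel deleting
at most `pn` bits on every input miscommunicates at most `ε|C|` codewords. -/
def onGood (p : ℝ) : Prop :=
  ∃ δ : ℝ, 0 < δ ∧ ∀ ε : ℝ, 0 < ε → ∀ n₀ : ℕ, ∃ n ≥ n₀, ∃ C : Finset (List Bool),
    (∀ c ∈ C, c.length = n) ∧ (C.card : ℝ) ≥ 2 ^ (δ * n) ∧
    ∃ Dec : List Bool → List Bool, (∀ s, Dec s ∈ C) ∧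
      ∀ f : List Bool → Bool, deletesAtMost f n p →
        ((C.filter (fun c => Dec (onlineOutput f c) ≠ c)).card : ℝ) ≤ ε * C.card

/-- The deterministic zero-rate threshold for online deletions. -/
noncomputable def p0ond : ℝ := sSup {p : ℝ | p ∈ Set.Icc (0 : ℝ) 1 ∧ onGood p}

/-! ### Online channels -/

lemma onlineOutput_nil (f : List Bool → Bool) : onlineOutput f [] = [] := by
  simp [onlineOutput]

lemma onlineOutput_snoc (f : List Bool → Bool) (x : List Bool) (a : Bool) :
    onlineOutput f (x ++ [a]) = onlineOutput f x ++ (if f (x ++ [a]) then [a] else []) := by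
  unfold onlineOutput
  rw [List.length_append, List.length_singleton, List.range_succ, List.filterMap_append]
  congr 1
  · apply List.filterMap_congr
    intro i hi
    have hi' : i < x.length := List.mem_range.mp hi
    rw [List.take_append_of_le_length (by omega), List.getD_append _ _ _ _ hi']
  · have h : (x ++ [a]).take (x.length + 1) = x ++ [a] := List.take_of_length_le (by simp)
    by_cases hf : f (x ++ [a]) <;> simp [h, hf]

lemma onlineOutput_sublist (f : List Bool → Bool) (x : List Bool) :
    (onlineOutput f x).Sublist x := by
  induction x using List.reverseRecOn with
  | nil => simp [onlineOutput_nil]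
  | append_singleton x a ih =>
    rw [onlineOutput_snoc]
    refine ih.append ?_
    split_ifs <;> simp

lemma onlineOutput_append (f : List Bool → Bool) (u s : List Bool) :
    onlineOutput f (u ++ s) = onlineOutput f u ++ onlineOutput (fun w => f (u ++ w)) s := by
  induction s using List.reverseRecOn with
  | nil => simp [onlineOutput_nil]
  | append_singleton s a ih =>
    rw [← List.append_assoc, onlineOutput_snoc, onlineOutput_snoc, ih]
    simp [List.append_assoc]

/-- The output depends only on the decisions made on nonempty prefixes of the input. -/
lemma onlineOutput_congr {f g : List Bool → Bool} (x : List Bool)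
    (h : ∀ w : List Bool, w ≠ [] → w.length ≤ x.length → f w = g w) :
    onlineOutput f x = onlineOutput g x := by
  induction x using List.reverseRecOn with
  | nil => simp [onlineOutput_nil]
  | append_singleton x a ih =>
    rw [onlineOutput_snoc, onlineOutput_snoc, h (x ++ [a]) (by simp) le_rfl,
      ih (fun w hw hl => h w hw (by simp; omega))]

lemma onlineOutput_true (x : List Bool) : onlineOutput (fun _ => true) x = x := by
  induction x using List.reverseRecOn with
  | nil => simp [onlineOutput_nil]
  | append_singleton x a ih => simp [onlineOutput_snoc, ih]

/-- Any subsequence of a word known in advance can be produced online. -/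
lemma exists_onlineOutput_eq {z s : List Bool} (h : z.Sublist s) :
    ∃ g : List Bool → Bool, onlineOutput g s = z := by
  induction h with
  | slnil => exact ⟨fun _ => true, onlineOutput_nil _⟩
  | @cons z s a _ ih =>
    obtain ⟨g, hg⟩ := ih
    refine ⟨fun w => decide (w.length ≠ 1) && g w.tail, ?_⟩
    have h1 : onlineOutput (fun w => decide (w.length ≠ 1) && g w.tail) ([a] ++ s) = z := by
      rw [onlineOutput_append, ← hg]
      have := onlineOutput_snoc (fun w => decide (w.length ≠ 1) && g w.tail) [] a
      simp [onlineOutput_nil] at this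
      rw [show onlineOutput (fun w => decide (w.length ≠ 1) && g w.tail) [a] = [] by simpa using this]
      rw [List.nil_append]
      apply onlineOutput_congr
      intro w hw _
      simp [hw]
    exact h1
  | @cons_cons z s a _ ih =>
    obtain ⟨g, hg⟩ := ih
    refine ⟨fun w => decide (w.length = 1) || g w.tail, ?_⟩
    have h1 : onlineOutput (fun w => decide (w.length = 1) || g w.tail) ([a] ++ s) = a :: z := by
      rw [onlineOutput_append, ← hg]
      have := onlineOutput_snoc (fun w => decide (w.length = 1) || g w.tail) [] a
      simp [onlineOutput_nil] at this
      rw [show onlineOutput (fun w => decide (w.length = 1) || g w.tail) [a] = [a] by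
        simpa using this]
      rw [List.singleton_append]
      congr 1
      apply onlineOutput_congr
      intro w hw _
      simp [hw]
    exact h1

/-- The channel transmitting exactly the first `k` occurrences of the bit `b`. -/
def capChannel (b : Bool) (k : ℕ) (w : List Bool) : Bool :=
  decide (w.getLast? = some b) && decide (w.count b ≤ k)

lemma onlineOutput_capChannel (b : Bool) (k : ℕ) (x : List Bool) :
    onlineOutput (capChannel b k) x = List.replicate (min k (x.count b)) b := by
  induction x using List.reverseRecOn with
  | nil => simp [onlineOutput_nil]
  | append_singleton x a ih =>
    rw [onlineOutput_snoc, ih]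
    by_cases hab : a = b
    · subst hab
      by_cases hk : x.count a + 1 ≤ k
      · have h1 : min k (x.count a) = x.count a := by omega
        simp [capChannel, List.count_append, hk, h1, List.replicate_succ']
      · have h1 : min k (x.count a) = k := by omega
        have h2 : min k (x.count a + 1) = k := by omega
        simp [capChannel, List.count_append, hk, h1, h2]
    · simp [capChannel, List.count_append, hab]

/-- The channel acting as `f` on the first `t` bits, and as `g u` on the rest of a word whose
prefix of length `t` is `u`. -/
def splitChannel (t : ℕ) (f : List Bool → Bool) (g : List Bool → List Bool → Bool)
    (w : List Bool) : Bool :=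
  if w.length ≤ t then f w else g (w.take t) (w.drop t)

lemma onlineOutput_splitChannel {t : ℕ} (f : List Bool → Bool) (g : List Bool → List Bool → Bool)
    {x : List Bool} (hx : t ≤ x.length) :
    onlineOutput (splitChannel t f g) x =
      onlineOutput f (x.take t) ++ onlineOutput (g (x.take t)) (x.drop t) := by
  have ht : (x.take t).length = t := by simp [hx]
  conv_lhs => rw [← List.take_append_drop t x]
  rw [onlineOutput_append]
  congr 1
  · apply onlineOutput_congr
    intro w _ hl
    have : w.length ≤ t := by omega
    simp [splitChannel, this]
  · apply onlineOutput_congr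
    intro w hw _
    have h0 : 0 < w.length := List.length_pos_of_ne_nil hw
    have h1 : ¬ ((x.take t ++ w).length ≤ t) := by rw [List.length_append]; omega
    unfold splitChannel
    rw [if_neg h1, List.take_left' ht, List.drop_left' ht]

/-- Any online channel can be stopped after `D` deletions, which does not change it on the inputs
where it deletes at most `D` bits. -/
lemma exists_budget (f : List Bool → Bool) (D : ℕ) :
    ∃ f' : List Bool → Bool, (∀ x, x.length ≤ (onlineOutput f' x).length + D) ∧
      ∀ x, x.length ≤ (onlineOutput f x).length + D → onlineOutput f' x = onlineOutput f x := by
  set f' : List Bool → Bool := fun w =>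
    f w || decide ((onlineOutput f w).length + D < w.length) with hf'
  have key : ∀ x : List Bool, x.length ≤ (onlineOutput f' x).length + D ∧
      (x.length ≤ (onlineOutput f x).length + D → onlineOutput f' x = onlineOutput f x) := by
    intro x
    induction x using List.reverseRecOn with
    | nil => simp [onlineOutput_nil]
    | append_singleton x a ih =>
      obtain ⟨ih1, ih2⟩ := ih
      have hs := onlineOutput_snoc f x a
      have hs' := onlineOutput_snoc f' x a
      have hl := congrArg List.length hs
      have hl' := congrArg List.length hs'
      by_cases hD : (onlineOutput f (x ++ [a])).length + D < (x ++ [a]).length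
      · have h1 : f' (x ++ [a]) = true := by simp only [hf', hD]; simp
        simp [h1] at hl'
        refine ⟨?_, fun h => by omega⟩
        simp; omega
      · have h1 : f' (x ++ [a]) = f (x ++ [a]) := by simp only [hf', hD]; simp
        have h2 : x.length ≤ (onlineOutput f x).length + D := by
          rw [hl] at hD
          by_cases hfa : f (x ++ [a]) <;> simp [hfa] at hD <;> omega
        have h3 : onlineOutput f' (x ++ [a]) = onlineOutput f (x ++ [a]) := by
          rw [hs', hs, h1, ih2 h2]
        refine ⟨by rw [h3]; omega, fun _ => h3⟩
  exact ⟨f', fun x => (key x).1, fun x => (key x).2⟩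

/-! ### Counting arguments -/

/-- If no word of `S` is the only word of `S` with its output, then at least half of `S` is decoded
wrongly. -/
lemma exists_attack {n D : ℕ} {p : ℝ} {C S : Finset (List Bool)} (Dec : List Bool → List Bool)
    (f : List Bool → Bool) (hD : (D : ℝ) ≤ p * n) (hSC : S ⊆ C) (hlen : ∀ c ∈ C, c.length = n)
    (hdel : ∀ x ∈ S, n ≤ (onlineOutput f x).length + D)
    (hpair : ∀ x ∈ S, ∃ y ∈ S, y ≠ x ∧ onlineOutput f y = onlineOutput f x) :
    ∃ f', deletesAtMost f' n p ∧
      S.card ≤ 2 * (C.filter (fun c => Dec (onlineOutput f' c) ≠ c)).card := by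
  obtain ⟨f', h1, h2⟩ := exists_budget f D
  have heq : ∀ x ∈ S, onlineOutput f' x = onlineOutput f x := fun x hx =>
    h2 x (by rw [hlen x (hSC hx)]; exact hdel x hx)
  refine ⟨f', ?_, ?_⟩
  · intro x hx
    have := h1 x
    refine le_trans ?_ hD
    exact_mod_cast (by omega : n - (onlineOutput f' x).length ≤ D)
  · choose! π hπS hπne hπ using hpair
    have hle : (S.filter (fun c => Dec (onlineOutput f' c) = c)).card ≤
        (S.filter (fun c => ¬ Dec (onlineOutput f' c) = c)).card := by
      have hval : ∀ x ∈ S.filter (fun c => Dec (onlineOutput f' c) = c),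
          Dec (onlineOutput f' (π x)) = x := by
        intro x hx
        obtain ⟨hxS, hx⟩ := Finset.mem_filter.mp hx
        rw [heq _ (hπS x hxS), hπ x hxS, ← heq x hxS, hx]
      refine Finset.card_le_card_of_injOn π ?_ ?_
      · intro x hx
        have hx' := hx
        obtain ⟨hxS, -⟩ := Finset.mem_filter.mp hx'
        refine Finset.mem_coe.mpr (Finset.mem_filter.mpr ⟨hπS x hxS, ?_⟩)
        rw [hval x hx]
        exact (hπne x hxS).symm
      · intro x hx y hy hxy
        rw [← hval x hx, ← hval y hy, hxy]
    have hadd := Finset.card_filter_add_card_filter_not (s := S)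
      (fun c => Dec (onlineOutput f' c) = c)
    have hsub : (S.filter (fun c => ¬ Dec (onlineOutput f' c) = c)).card ≤
        (C.filter (fun c => Dec (onlineOutput f' c) ≠ c)).card :=
      Finset.card_le_card (Finset.filter_subset_filter _ hSC)
    omega

/-- One of the two bits is a majority bit of `φ x` for at least half of the words `x`. -/
lemma exists_majority (C : Finset (List Bool)) (φ : List Bool → List Bool) :
    ∃ b : Bool, C.card ≤ 2 * (C.filter (fun x => (φ x).length ≤ 2 * (φ x).count b)).card := by
  by_contra! h
  have h1 := h true
  have h2 := h false
  have hC : C ⊆ C.filter (fun x => (φ x).length ≤ 2 * (φ x).count true) ∪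
      C.filter (fun x => (φ x).length ≤ 2 * (φ x).count false) := by
    intro x hx
    have := List.count_true_add_count_false (φ x)
    simp only [Finset.mem_union, Finset.mem_filter, hx, true_and]
    omega
  have := (Finset.card_le_card hC).trans (Finset.card_union_le _ _)
  omega

/-- Greedy pairing: outside a set `S` whose words are grouped into pairs having a common
subsequence `z` of length at least `a`, no two words have such a common subsequence. -/
lemma exists_pairing (φ : List Bool → List Bool) (a : ℝ) (L : Finset (List Bool)) :
    ∃ S ⊆ L, ∃ z : List Bool → List Bool,
      (∀ x ∈ S, (z x).Sublist (φ x) ∧ a ≤ (z x).length ∧ ∃ y ∈ S, y ≠ x ∧ z y = z x) ∧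
      ∀ x ∈ L \ S, ∀ y ∈ L \ S, x ≠ y →
        ∀ w : List Bool, w.Sublist (φ x) → w.Sublist (φ y) → (w.length : ℝ) < a := by
  induction L using Finset.strongInduction with
  | H L ih =>
    by_cases hind : ∀ x ∈ L, ∀ y ∈ L, x ≠ y →
        ∀ w : List Bool, w.Sublist (φ x) → w.Sublist (φ y) → (w.length : ℝ) < a
    · exact ⟨∅, by simp, id, by simp, by simpa using hind⟩
    · push Not at hind
      obtain ⟨x, hx, y, hy, hxy, w, hwx, hwy, hw⟩ := hind
      have hss : L \ {x, y} ⊂ L := by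
        refine Finset.ssubset_iff_subset_ne.mpr ⟨Finset.sdiff_subset, fun h => ?_⟩
        rw [← h] at hx
        simp at hx
      obtain ⟨S, hSL, z, hz, hindS⟩ := ih _ hss
      have hxS : x ∉ S := fun h => by have := hSL h; simp at this
      have hyS : y ∉ S := fun h => by have := hSL h; simp at this
      refine ⟨S ∪ {x, y}, ?_, fun v => if v = x ∨ v = y then w else z v, ?_, ?_⟩
      · refine Finset.union_subset (hSL.trans Finset.sdiff_subset) ?_
        intro v hv
        simp only [Finset.mem_insert, Finset.mem_singleton] at hv
        rcases hv with rfl | rfl <;> assumption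
      · intro v hv
        by_cases hvx : v = x
        · subst hvx
          simp only [true_or, if_true]
          exact ⟨hwx, hw, y, by simp, hxy.symm, by simp⟩
        by_cases hvy : v = y
        · subst hvy
          simp only [or_true, if_true]
          exact ⟨hwy, hw, x, by simp, hxy, by simp⟩
        have hvS : v ∈ S := by simpa [hvx, hvy] using hv
        obtain ⟨h1, h2, y', hy', hne, hzz⟩ := hz v hvS
        have h3 : y' ≠ x := fun h => hxS (h ▸ hy')
        have h4 : y' ≠ y := fun h => hyS (h ▸ hy')
        simp only [hvx, hvy, or_self, if_false]
        exact ⟨h1, h2, y', by simp [hy'], hne, by simp [h3, h4, hzz]⟩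
      · intro v hv v' hv'
        refine hindS v ?_ v' ?_
        · simp at hv ⊢; tauto
        · simp at hv' ⊢; tauto

/-! ### Relations between the two notions -/

lemma advGood.onGood {p : ℝ} (h : advGood p) : onGood p := by
  obtain ⟨δ, hδ, h⟩ := h
  refine ⟨δ, hδ, fun ε hε n₀ => ?_⟩
  obtain ⟨n, hn, C, hlen, hcard, hC⟩ := h n₀
  have hne : C.Nonempty := by
    rw [← Finset.card_pos]
    have : (0 : ℝ) < C.card := lt_of_lt_of_le (by positivity) hcard
    exact_mod_cast this
  obtain ⟨c₀, hc₀⟩ := hne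
  have hdec : ∀ s : List Bool, ∃ d ∈ C, (∃ c ∈ C, s.Sublist c) → s.Sublist d := by
    intro s
    by_cases hs : ∃ c ∈ C, s.Sublist c
    · obtain ⟨c, hc, hsc⟩ := hs
      exact ⟨c, hc, fun _ => hsc⟩
    · exact ⟨c₀, hc₀, fun h => absurd h hs⟩
  choose Dec hDC hDec using hdec
  refine ⟨n, hn, C, hlen, hcard, Dec, hDC, fun f hf => ?_⟩
  have hempty : C.filter (fun c => Dec (onlineOutput f c) ≠ c) = ∅ := by
    rw [Finset.filter_eq_empty_iff]
    intro c hc hne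
    have hsub := onlineOutput_sublist f c
    have h1 := hC _ (hDC (onlineOutput f c)) c hc hne _ (hDec _ ⟨c, hc, hsub⟩) hsub
    have h2 := hf c (hlen c hc)
    have h3 : (onlineOutput f c).length ≤ n := by
      have := hsub.length_le
      rwa [hlen c hc] at this
    rw [Nat.cast_sub h3] at h2
    linarith
  rw [hempty]
  simp
  positivity

lemma onGood.mono {p q : ℝ} (hpq : p ≤ q) (h : onGood q) : onGood p := by
  obtain ⟨δ, hδ, h⟩ := h
  refine ⟨δ, hδ, fun ε hε n₀ => ?_⟩
  obtain ⟨n, hn, C, hlen, hcard, Dec, hDC, hC⟩ := h ε hε n₀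
  refine ⟨n, hn, C, hlen, hcard, Dec, hDC, fun f hf => hC f fun x hx => (hf x hx).trans ?_⟩
  gcongr

/-- For every rate `δ > 0` and every constant `K`, the bound `2 ^ (δ n)` eventually exceeds `K`. -/
lemma exists_rpow_ge {δ : ℝ} (hδ : 0 < δ) (K : ℝ) :
    ∃ n₀ : ℕ, ∀ n : ℕ, n₀ ≤ n → K ≤ (2 : ℝ) ^ (δ * n) := by
  have h1 : Filter.Tendsto (fun n : ℕ => ((2 : ℝ) ^ δ) ^ n) Filter.atTop Filter.atTop :=
    tendsto_pow_atTop_atTop_of_one_lt (Real.one_lt_rpow (by norm_num) hδ)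
  obtain ⟨n₀, h⟩ := Filter.eventually_atTop.mp (h1.eventually_ge_atTop K)
  refine ⟨n₀, fun n hn => ?_⟩
  rw [Real.rpow_mul (by norm_num), Real.rpow_natCast]
  exact h n hn

lemma not_onGood_of_half_lt {p : ℝ} (hp : 1 / 2 < p) : ¬ onGood p := by
  rintro ⟨δ, hδ, h⟩
  obtain ⟨n₀, hn₀⟩ := exists_rpow_ge hδ 4
  obtain ⟨n, hn, C, hlen, hcard, Dec, hDC, hC⟩ := h (1 / 8) (by norm_num) n₀
  have h4 : (4 : ℝ) ≤ C.card := (hn₀ n hn).trans hcard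
  have h4' : 4 ≤ C.card := by exact_mod_cast h4
  obtain ⟨b, hb⟩ := exists_majority C id
  set S := C.filter (fun x => (id x).length ≤ 2 * (id x).count b) with hS
  have hout : ∀ x ∈ S, onlineOutput (capChannel b ((n + 1) / 2)) x =
      List.replicate ((n + 1) / 2) b := by
    intro x hx
    obtain ⟨hxC, hx⟩ := Finset.mem_filter.mp hx
    rw [id, hlen x hxC] at hx
    rw [onlineOutput_capChannel, min_eq_left (by omega)]
  have hDn : ((n / 2 : ℕ) : ℝ) ≤ p * n := by
    have h1 : ((n / 2 : ℕ) : ℝ) ≤ (n : ℝ) / 2 := Nat.cast_div_le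
    have h2 : (0 : ℝ) ≤ n := Nat.cast_nonneg n
    nlinarith
  obtain ⟨f', hf', herr⟩ := exists_attack (S := S) Dec (capChannel b ((n + 1) / 2)) hDn
    (Finset.filter_subset _ _) hlen
    (fun x hx => by rw [hout x hx, List.length_replicate]; omega)
    (fun x hx => by
      obtain ⟨y, hy, hne⟩ := Finset.exists_mem_ne (s := S) (by omega) x
      exact ⟨y, hy, hne, by rw [hout x hx, hout y hy]⟩)
  have h1 := hC f' hf'
  have h2 : (C.card : ℝ) ≤
      4 * (C.filter (fun c => Dec (onlineOutput f' c) ≠ c)).card := by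
    exact_mod_cast (by omega : C.card ≤ 4 * (C.filter (fun c => Dec (onlineOutput f' c) ≠ c)).card)
  linarith

/-- An adversarial threshold below `1/2` yields an online threshold below `1/2`. -/
lemma not_onGood_of_not_advGood {q : ℝ} (hq0 : 0 < q) (hq : q < 1 / 2) (hadv : ¬ advGood q) :
    ¬ onGood ((q + 1 / 2) / 2) := by
  rintro ⟨δ, hδ, hon⟩
  unfold advGood at hadv
  push Not at hadv
  obtain ⟨m₀, hm₀⟩ := hadv (δ / 2) (by positivity)
  obtain ⟨n₁, hn₁⟩ := exists_rpow_ge (half_pos hδ) 16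
  obtain ⟨n₂, hn₂⟩ := exists_nat_gt (1 / q)
  obtain ⟨n, hn, C, hlen, hcard, Dec, hDC, hC⟩ :=
    hon (1 / 64) (by norm_num) (2 * m₀ + n₁ + n₂)
  -- The words are cut into a prefix of length `t` and a suffix of length `m`.
  obtain ⟨t, ht⟩ : ∃ t, t = n / 2 := ⟨_, rfl⟩
  obtain ⟨m, hm⟩ : ∃ m, m = n - t := ⟨_, rfl⟩
  have htR : (t : ℝ) ≤ n / 2 := by rw [ht]; exact Nat.cast_div_le
  have htm : t + m = n := by omega
  have htmR : (t : ℝ) + m = n := by exact_mod_cast htm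
  have hmR : (m : ℝ) ≤ (n + 1) / 2 := by
    rw [le_div_iff₀ (by norm_num)]
    exact_mod_cast (by omega : m * 2 ≤ n + 1)
  have hqn : 1 < q * n := by
    have h1 : (n₂ : ℝ) ≤ n := by exact_mod_cast (by omega : n₂ ≤ n)
    have h2 := hn₂.trans_le h1
    rwa [div_lt_iff₀' hq0] at h2
  have hlarge : 16 * (2 : ℝ) ^ (δ / 2 * n) ≤ C.card := by
    have h1 := hn₁ n (by omega)
    have h2 : (2 : ℝ) ^ (δ * n) = 2 ^ (δ / 2 * n) * 2 ^ (δ / 2 * n) := by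
      rw [← Real.rpow_add (by norm_num)]; ring_nf
    rw [h2] at hcard
    have h3 : (0 : ℝ) < 2 ^ (δ / 2 * n) := by positivity
    nlinarith
  have hCpos : (0 : ℝ) < C.card := lt_of_lt_of_le (by positivity) hlarge
  -- A sixteenth of the code grouped into words with equal outputs contradicts the error bound.
  have hfinal : ∀ (S : Finset (List Bool)) (f : List Bool → Bool), S ⊆ C →
      C.card ≤ 16 * S.card →
      (∀ x ∈ S, (n : ℝ) - (onlineOutput f x).length ≤ (q + 1 / 2) / 2 * n) →
      (∀ x ∈ S, ∃ y ∈ S, y ≠ x ∧ onlineOutput f y = onlineOutput f x) → False := by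
    intro S f hSC hScard hdel hpair
    obtain ⟨f', hf', herr⟩ := exists_attack Dec f
      (D := ⌊(q + 1 / 2) / 2 * n⌋₊) (Nat.floor_le (by positivity)) hSC hlen
      (fun x hx => by
        have h1 := hdel x hx
        have h2 : n - (onlineOutput f x).length ≤ ⌊(q + 1 / 2) / 2 * n⌋₊ := by
          refine Nat.le_floor ?_
          have h3 : (onlineOutput f x).length ≤ n := by
            have := (onlineOutput_sublist f x).length_le
            rwa [hlen x (hSC hx)] at this
          rwa [Nat.cast_sub h3]
        omega)
      hpair
    have h1 := hC f' hf'
    have h2 : (C.card : ℝ) ≤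
        32 * (C.filter (fun c => Dec (onlineOutput f' c) ≠ c)).card := by
      exact_mod_cast
        (by omega : C.card ≤ 32 * (C.filter (fun c => Dec (onlineOutput f' c) ≠ c)).card)
    linarith
  obtain ⟨b₁, hb₁⟩ := exists_majority C (List.take t)
  set C₁ := C.filter (fun x => (x.take t).length ≤ 2 * (x.take t).count b₁) with hC₁
  obtain ⟨b₂, hb₂⟩ := exists_majority C₁ (List.drop t)
  set C₂ := C₁.filter (fun x => (x.drop t).length ≤ 2 * (x.drop t).count b₂) with hC₂
  have hC₂C : C₂ ⊆ C := (Finset.filter_subset _ _).trans (Finset.filter_subset _ _)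
  have hprefix : ∀ x ∈ C₂, onlineOutput (capChannel b₁ ((t + 1) / 2)) (x.take t) =
      List.replicate ((t + 1) / 2) b₁ := by
    intro x hx
    have hl := hlen x (hC₂C hx)
    have h1 := (Finset.mem_filter.mp (Finset.mem_filter.mp hx).1).2
    rw [List.length_take, hl] at h1
    rw [onlineOutput_capChannel, min_eq_left (by omega)]
  have hsuffix : ∀ x ∈ C₂, onlineOutput (capChannel b₂ ((m + 1) / 2)) (x.drop t) =
      List.replicate ((m + 1) / 2) b₂ := by
    intro x hx
    have hl := hlen x (hC₂C hx)
    have h1 := (Finset.mem_filter.mp hx).2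
    rw [List.length_drop, hl] at h1
    rw [onlineOutput_capChannel, min_eq_left (by omega)]
  have hlt : ∀ x ∈ C₂, t ≤ x.length := fun x hx => by rw [hlen x (hC₂C hx)]; omega
  set H := C₂.filter (fun x => ∃ y ∈ C₂, y ≠ x ∧ y.take t = x.take t) with hH
  set L := C₂.filter (fun x => ¬ ∃ y ∈ C₂, y ≠ x ∧ y.take t = x.take t) with hL
  have hHL : H.card + L.card = C₂.card := Finset.card_filter_add_card_filter_not _
  have hHC₂ : H ⊆ C₂ := Finset.filter_subset _ _
  have hLC₂ : L ⊆ C₂ := Finset.filter_subset _ _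
  by_cases hbig : C₂.card ≤ 2 * H.card
  · -- Many words share their prefix: transmit the prefix, erase the suffix.
    have hout : ∀ x ∈ H, onlineOutput
        (splitChannel t (fun _ => true) (fun _ => capChannel b₂ ((m + 1) / 2))) x =
        x.take t ++ List.replicate ((m + 1) / 2) b₂ := by
      intro x hx
      rw [onlineOutput_splitChannel _ _ (hlt x (hHC₂ hx)), onlineOutput_true,
        hsuffix x (hHC₂ hx)]
    refine hfinal H
      (splitChannel t (fun _ => true) (fun _ => capChannel b₂ ((m + 1) / 2))) (hHC₂.trans hC₂C) (by omega) ?_ ?_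
    · intro x hx
      rw [hout x hx, List.length_append, List.length_replicate, List.length_take,
        min_eq_left (hlt x (hHC₂ hx))]
      have h1 : (m : ℝ) ≤ 2 * ((m + 1) / 2 : ℕ) := by
        exact_mod_cast (by omega : m ≤ 2 * ((m + 1) / 2))
      push_cast at h1 ⊢
      linarith
    · intro x hx
      obtain ⟨hxC, y, hyC, hne, hy⟩ := Finset.mem_filter.mp hx
      have hyH : y ∈ H := Finset.mem_filter.mpr ⟨hyC, x, hxC, hne.symm, hy.symm⟩
      exact ⟨y, hyH, hne, by rw [hout x hx, hout y hyH, hy]⟩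
  · -- Most words are determined by their prefix: erase the prefix, attack the suffix.
    have hinj : ∀ x ∈ L, ∀ y ∈ L, y.take t = x.take t → y = x := by
      intro x hx y hy hxy
      by_contra hne
      exact (Finset.mem_filter.mp hx).2 ⟨y, hLC₂ hy, hne, hxy⟩
    obtain ⟨S, hSL, z, hz, hind⟩ := exists_pairing (List.drop t) ((1 - q) * m) L
    have hdroplen : ∀ x ∈ L, (x.drop t).length = m := by
      intro x hx
      rw [List.length_drop, hlen x (hC₂C (hLC₂ hx)), hm]
    have hdropinj : Set.InjOn (List.drop t) ((L \ S : Finset (List Bool)) : Set (List Bool)) := by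
      intro x hx y hy hxy
      by_contra hne
      have h1 := hind x hx y hy hne (x.drop t) (List.Sublist.refl _) (by rw [hxy])
      rw [hdroplen x (Finset.sdiff_subset hx)] at h1
      have h2 : (0 : ℝ) ≤ m := Nat.cast_nonneg m
      -- A common suffix would give `m < (1 - q) m`.
      nlinarith
    -- The unpaired suffixes form an adversarially good code, hence are few.
    have hrest : ((L \ S).card : ℝ) < 2 ^ (δ / 2 * m) := by
      by_contra! hge
      obtain ⟨x, hx, y, hy, hne, w, hwx, hwy, hw⟩ := hm₀ m (by omega)
        ((L \ S).image (List.drop t))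
        (by
          intro c hc
          obtain ⟨x, hx, rfl⟩ := Finset.mem_image.mp hc
          exact hdroplen x (Finset.sdiff_subset hx))
        (by rw [Finset.card_image_of_injOn hdropinj]; exact hge)
      obtain ⟨x', hx', rfl⟩ := Finset.mem_image.mp hx
      obtain ⟨y', hy', rfl⟩ := Finset.mem_image.mp hy
      exact absurd (hind x' hx' y' hy' (fun h => hne (by rw [h])) w hwx hwy) (not_lt.mpr hw)
    have hrest' : 16 * (L \ S).card ≤ C.card := by
      have h1 : (2 : ℝ) ^ (δ / 2 * m) ≤ 2 ^ (δ / 2 * n) := by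
        apply Real.rpow_le_rpow_of_exponent_le (by norm_num)
        have : (m : ℝ) ≤ n := by exact_mod_cast (by omega : m ≤ n)
        gcongr
      have h2 : (16 : ℝ) * (L \ S).card ≤ C.card := by linarith
      exact_mod_cast h2
    have hScard : (L \ S).card + S.card = L.card := Finset.card_sdiff_add_card_eq_card hSL
    have hg : ∀ u : List Bool, ∃ g : List Bool → Bool,
        ∀ x ∈ S, x.take t = u → onlineOutput g (x.drop t) = z x := by
      intro u
      by_cases hu : ∃ x ∈ S, x.take t = u
      · obtain ⟨x, hx, hxu⟩ := hu
        obtain ⟨g, hg⟩ := exists_onlineOutput_eq (hz x hx).1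
        refine ⟨g, fun y hy hyu => ?_⟩
        rw [hinj x (hSL hx) y (hSL hy) (hyu.trans hxu.symm), hg]
      · exact ⟨fun _ => true, fun x hx hxu => absurd ⟨x, hx, hxu⟩ hu⟩
    choose g hg using hg
    have hout : ∀ x ∈ S, onlineOutput (splitChannel t (capChannel b₁ ((t + 1) / 2)) g) x =
        List.replicate ((t + 1) / 2) b₁ ++ z x := by
      intro x hx
      have hxC := hLC₂ (hSL hx)
      rw [onlineOutput_splitChannel _ _ (hlt x hxC), hprefix x hxC, hg _ x hx rfl]
    refine hfinal S (splitChannel t (capChannel b₁ ((t + 1) / 2)) g)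
      (hSL.trans (hLC₂.trans hC₂C)) (by omega) ?_ ?_
    · intro x hx
      rw [hout x hx, List.length_append, List.length_replicate]
      have h1 : (t : ℝ) ≤ 2 * ((t + 1) / 2 : ℕ) := by
        exact_mod_cast (by omega : t ≤ 2 * ((t + 1) / 2))
      have h2 := (hz x hx).2.1
      push_cast at h1 ⊢
      -- The deletions number at most `t / 2 + q m = q n + (1/2 - q) t`, and `t ≤ n / 2`.
      nlinarith
    · intro x hx
      obtain ⟨-, -, y, hy, hne, hyz⟩ := hz x hx
      exact ⟨y, hy, hne, by rw [hout x hx, hout y hy, hyz]⟩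

lemma bddAbove_thresholds (P : ℝ → Prop) : BddAbove {p : ℝ | p ∈ Set.Icc (0 : ℝ) 1 ∧ P p} :=
  ⟨1, fun _ hp => hp.1.2⟩

lemma p0ond_le_half : p0ond ≤ 1 / 2 := by
  refine Real.sSup_le (fun p hp => ?_) (by norm_num)
  by_contra! h
  exact not_onGood_of_half_lt h hp.2

lemma p0adv_le_p0ond : p0adv ≤ p0ond := by
  refine Real.sSup_le (fun p hp => ?_) (Real.sSup_nonneg fun p hp => hp.1.1)
  exact le_csSup (bddAbove_thresholds _) ⟨hp.1, hp.2.onGood⟩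

/-- The adversarial zero-rate threshold equals `1/2` iff the deterministic zero-rate
threshold for online deletions equals `1/2`. -/
theorem adv_threshold_half_iff_online_threshold_half :
    p0adv = 1 / 2 ↔ p0ond = 1 / 2 := by
  constructor
  · intro h
    exact le_antisymm p0ond_le_half (h ▸ p0adv_le_p0ond)
  · intro h
    refine le_antisymm (p0adv_le_p0ond.trans p0ond_le_half) ?_
    by_contra! hlt
    have h0 : 0 ≤ p0adv := Real.sSup_nonneg fun p hp => hp.1.1
    obtain ⟨q, hq1, hq2⟩ := exists_between hlt
    have hq0 : 0 < q := h0.trans_lt hq1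
    have hbad : ¬ advGood q := fun hgood =>
      absurd (le_csSup (bddAbove_thresholds _) ⟨⟨hq0.le, by linarith⟩, hgood⟩) (not_le.mpr hq1)
    have hon := not_onGood_of_not_advGood hq0 hq2 hbad
    have hle : p0ond ≤ (q + 1 / 2) / 2 := by
      refine Real.sSup_le (fun p hp => ?_) (by linarith)
      by_contra! hp'
      exact hon (hp.2.mono hp'.le)
    linarith
end

section
/- Let p and R be real numbers with p > 1/(3 − 2·p0_adv) and R > 0. Then there exists n₀ such that for every n ≥ n₀ and every code C ⊆ {0,1}^n with |C| ≥ 2^{Rn}, there exists a deterministic online deletion channel that deletes at most pn bits on every input and such that for every decoding function Dec from binary strings to C, the number of codewords c ∈ C with Dec(channel output on input c) ≠ c is at least |C|/10. -/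
/-!
Write `p₀ = p0adv`, `s = ⌊pn⌋` and `m = n - s`. Two attacks suffice.

*Truncation* (`truncation_attack`). Deleting the last `s` bits leaves only the prefix of length
`m`. If the code has at most `9|C|/10` distinct such prefixes, at least `|C|/10` codewords are
misdecoded, because correctly decoded codewords have distinct outputs (`errors_lower_bound`).

*Majority attack* (`majority_attack`). Otherwise at least `4|C|/5` codewords are identified by
their first `m` bits (`two_mul_card_image_le`), and at least half of these have the same
majority bit `b` in that prefix. On them the channel keeps exactly `⌈m/2⌉` copies of `b` from the
prefix, an online operation whose result is the same for all of them. After the prefix it knows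
the whole codeword, so it can send any chosen subsequence of the remaining `s` bits. For
`q > p₀` slightly above the threshold, any exponentially large set of codewords contains
two whose suffixes have a common subsequence of length `(1-q)s` (`exists_pair_of_gt_p0adv`).
Pairing greedily (`exists_greedy_pairing`) covers all but `|C|/5` of the `2|C|/5` codewords, and
in each pair at least one is misdecoded: at least `|C|/10` errors. The number of deletions is at
most `m/2 + qs ≈ ((1-p)/2 + qp) n`, which is below `pn` because `p(3-2q) > 1`.

The attack is prescribed as a deletion pattern for each paired codeword;
`exists_channel_of_masks` turns such patterns into an online channel that respects the deletion
budget on every input.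
-/

open scoped Classical

/-! ### Masks -/

/-- The subsequence of `x` at the positions where the mask `g` is `true`. -/
def masked (g : ℕ → Bool) (x : List Bool) : List Bool :=
  (List.range x.length).filterMap (fun i => if g i then some (x.getD i false) else none)

theorem onlineOutput_eq_masked (f : List Bool → Bool) (x : List Bool) :
    onlineOutput f x = masked (fun i => f (x.take (i + 1))) x := rfl

theorem masked_congr {g g' : ℕ → Bool} {x : List Bool} (h : ∀ i < x.length, g i = g' i) :
    masked g x = masked g' x := by
  unfold masked
  apply List.filterMap_congr
  intro i hi
  rw [h i (List.mem_range.1 hi)]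

theorem masked_cons (g : ℕ → Bool) (a : Bool) (l : List Bool) :
    masked g (a :: l) = (if g 0 then [a] else []) ++ masked (fun i => g (i + 1)) l := by
  unfold masked
  rw [List.length_cons, List.range_succ_eq_map, List.filterMap_cons, List.filterMap_map]
  cases h : g 0 <;> simp

theorem masked_append (g : ℕ → Bool) (u v : List Bool) :
    masked g (u ++ v) = masked g u ++ masked (fun i => g (u.length + i)) v := by
  induction u generalizing g with
  | nil => simp [masked]
  | cons a u ih =>
    rw [List.cons_append, masked_cons, masked_cons, ih, List.append_assoc]
    simp only [List.length_cons, Nat.add_right_comm]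

theorem length_masked_add (g : ℕ → Bool) (x : List Bool) :
    (masked g x).length + ((Finset.range x.length).filter (fun i => g i = false)).card
      = x.length := by
  induction x using List.reverseRecOn with
  | nil => simp [masked]
  | append_singleton u a ih =>
    rw [masked_append, List.length_append, List.length_append, List.length_singleton,
      Finset.range_add_one, Finset.filter_insert]
    cases h : g u.length
    · simp [h, masked] at ih ⊢
      omega
    · simp [h, masked] at ih ⊢
      omega

theorem exists_mask_of_sublist {z v : List Bool} (h : z.Sublist v) :
    ∃ g : ℕ → Bool, masked g v = z := by
  induction h with
  | slnil => exact ⟨fun _ => true, rfl⟩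
  | cons a _ ih =>
    obtain ⟨g, hg⟩ := ih
    exact ⟨fun i => i.casesOn false g, by simpa [masked_cons] using hg⟩
  | cons_cons a _ ih =>
    obtain ⟨g, hg⟩ := ih
    exact ⟨fun i => i.casesOn true g, by simpa [masked_cons] using hg⟩

/-- The online mask that keeps exactly the first `h` occurrences of the bit `b`. -/
def keepFirst (b : Bool) (h : ℕ) (x : List Bool) (i : ℕ) : Bool :=
  decide (x.getD i false = b ∧ (x.take i).count b < h)

theorem keepFirst_congr (b : Bool) (h : ℕ) {x y : List Bool} {i : ℕ}
    (hxy : x.take (i + 1) = y.take (i + 1)) : keepFirst b h x i = keepFirst b h y i := by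
  have h1 : x.getD i false = y.getD i false := by
    have := congrArg (fun l => l.getD i false) hxy
    simpa [List.getD_eq_getElem?_getD, List.getElem?_take] using this
  have h2 : x.take i = y.take i := by
    have := congrArg (List.take i) hxy
    simpa [List.take_take] using this
  unfold keepFirst
  rw [h1, h2]

theorem masked_keepFirst (b : Bool) (h : ℕ) (u : List Bool) :
    masked (keepFirst b h u) u = List.replicate (min h (u.count b)) b := by
  induction u using List.reverseRecOn with
  | nil => simp [masked]
  | append_singleton u a ih =>
    have hc : masked (keepFirst b h (u ++ [a])) u = masked (keepFirst b h u) u := by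
      apply masked_congr
      intro i hi
      apply keepFirst_congr
      rw [List.take_append_of_le_length (by omega)]
    rw [masked_append, hc, ih, masked_cons]
    simp only [masked, keepFirst, List.count_append, List.count_singleton]
    by_cases hab : a = b
    · subst hab
      by_cases hlt : u.count a < h
      · simp [hlt, Nat.min_eq_right hlt.le, List.replicate_succ']
      · have h1 : min h (u.count a) = h := by omega
        have h2 : min h (u.count a + 1) = h := by omega
        simp [hlt, h1, h2]
    · simp [hab]

/-! ### Counting -/

/-- Codewords of `P` that are decoded correctly have distinct outputs. -/
theorem errors_lower_bound (f Dec : List Bool → List Bool) {C P : Finset (List Bool)}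
    (hP : P ⊆ C) :
    P.card ≤ (C.filter (fun c => Dec (f c) ≠ c)).card + (P.image f).card := by
  have h1 := Finset.card_filter_add_card_filter_not (s := P) (fun c => Dec (f c) ≠ c)
  have h2 : (P.filter (fun c => Dec (f c) ≠ c)).card ≤
      (C.filter (fun c => Dec (f c) ≠ c)).card :=
    Finset.card_le_card (Finset.filter_subset_filter _ hP)
  have h3 : (P.filter (fun c => ¬ Dec (f c) ≠ c)).card ≤ (P.image f).card := by
    apply Finset.card_le_card_of_injOn f
    · intro x hx
      simp only [Finset.coe_filter, Set.mem_ofPred_eq] at hx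
      exact Finset.mem_coe.2 (Finset.mem_image_of_mem f hx.1)
    · intro x hx y hy hxy
      simp only [Finset.coe_filter, Set.mem_ofPred_eq, not_not] at hx hy
      rw [← hx.2, ← hy.2, hxy]
  omega

/-- If most values of `g` on `C` are distinct, then most points of `C` are alone in their
fibre: every other fibre uses up at least two points. -/
theorem two_mul_card_image_le {α β : Type*} [DecidableEq α] [DecidableEq β] (g : α → β)
    (C : Finset α) :
    2 * (C.image g).card ≤
      C.card + (C.filter (fun x => ∀ y ∈ C, g y = g x → y = x)).card := by
  set U := C.filter (fun x => ∀ y ∈ C, g y = g x → y = x) with hU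
  set V := C.filter (fun x => ¬ ∀ y ∈ C, g y = g x → y = x) with hV
  have hUV : U.card + V.card = C.card := Finset.card_filter_add_card_filter_not _
  have himg : C.image g = U.image g ∪ V.image g := by
    rw [← Finset.image_union, hU, hV, Finset.filter_union_filter_not_eq]
  have h1 : (C.image g).card ≤ (U.image g).card + (V.image g).card := by
    rw [himg]; exact Finset.card_union_le _ _
  have h2 : (U.image g).card ≤ U.card := Finset.card_image_le
  have h3 : 2 * (V.image g).card ≤ V.card := by
    apply Finset.mul_card_image_le_card
    intro b hb
    obtain ⟨x, hx, rfl⟩ := Finset.mem_image.1 hb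
    obtain ⟨hxC, hxne⟩ := Finset.mem_filter.1 hx
    push Not at hxne
    obtain ⟨y, hyC, hgy, hyx⟩ := hxne
    have hy : y ∈ V := Finset.mem_filter.2 ⟨hyC, fun h => hyx (h x hxC hgy.symm).symm⟩
    exact Finset.one_lt_card_iff.2
      ⟨x, y, Finset.mem_filter.2 ⟨hx, rfl⟩, Finset.mem_filter.2 ⟨hy, hgy⟩, hyx.symm⟩
  omega

/-- Greedy pairing: if every subset of `S` of size at least `K` contains two distinct points
with a common `A`-value, then all but fewer than `K` points of `S` receive `A`-values in such
a way that at most half as many values as points are used. -/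
theorem exists_greedy_pairing {α β : Type*} [DecidableEq α] [DecidableEq β] [Inhabited β]
    (A : α → β → Prop) (K : ℝ) (S : Finset α)
    (h : ∀ S' ⊆ S, K ≤ S'.card → ∃ x ∈ S', ∃ y ∈ S', x ≠ y ∧ ∃ z, A x z ∧ A y z) :
    ∃ P ⊆ S, ∃ z : α → β, (∀ x ∈ P, A x (z x)) ∧ 2 * (P.image z).card ≤ P.card ∧
      (S.card : ℝ) < P.card + K := by
  induction S using Finset.strongInduction with
  | H S ih =>
    by_cases hS : K ≤ S.card
    · obtain ⟨x, hx, y, hy, hxy, w, hxw, hyw⟩ := h S subset_rfl hS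
      have hsub : {x, y} ⊆ S := by
        intro a ha
        rcases Finset.mem_insert.1 ha with rfl | ha
        · exact hx
        · rw [Finset.mem_singleton.1 ha]; exact hy
      have hss : S \ {x, y} ⊂ S := Finset.sdiff_ssubset hsub ⟨x, by simp⟩
      obtain ⟨P, hPS, z, hz, hcard, hbig⟩ := ih _ hss
        (fun S' hS' => h S' (hS'.trans hss.subset))
      have hxP : x ∉ P := fun hc => by simpa using hPS hc
      have hyP : y ∉ P := fun hc => by simpa using hPS hc
      have hdisj : Disjoint P {x, y} := by
        rw [Finset.disjoint_right]
        intro a ha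
        rcases Finset.mem_insert.1 ha with rfl | ha
        · exact hxP
        · rw [Finset.mem_singleton.1 ha]; exact hyP
      have hc2 : (P ∪ {x, y}).card = P.card + 2 := by
        rw [Finset.card_union_of_disjoint hdisj, Finset.card_pair hxy]
      refine ⟨P ∪ {x, y}, Finset.union_subset (hPS.trans hss.subset) hsub,
        fun a => if a ∈ P then z a else w, ?_, ?_, ?_⟩
      · intro a ha
        by_cases haP : a ∈ P
        · simpa [haP] using hz a haP
        · have : a = x ∨ a = y := by simpa [haP] using ha
          rcases this with rfl | rfl <;> simpa [haP]
      · have : (P ∪ {x, y}).image (fun a => if a ∈ P then z a else w) ⊆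
            insert w (P.image z) := by
          intro b hb
          obtain ⟨a, -, rfl⟩ := Finset.mem_image.1 hb
          by_cases haP : a ∈ P
          · simpa [haP] using Or.inr ⟨a, haP, rfl⟩
          · simp [haP]
        have := (Finset.card_le_card this).trans (Finset.card_insert_le _ _)
        omega
      · have h1 : (S \ {x, y}).card + 2 = S.card := by
          rw [← Finset.card_pair hxy]; exact Finset.card_sdiff_add_card_eq_card hsub
        rw [hc2, ← h1]
        push_cast
        linarith
    · exact ⟨∅, by simp, fun _ => default, by simp, by simp, by simpa using hS⟩

/-! ### From deletion patterns to online channels -/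

/-- A family of deletion patterns on `P` that is realizable online, in the sense that the
decision at position `i` depends only on the first `i + 1` bits, extends to an online channel.
The channel deletes a bit only if the prefix seen so far is that of some `x ∈ P` whose pattern
deletes that position; hence on an arbitrary input the deleted positions are among those of a
single pattern and the deletion budget is respected automatically. -/
theorem exists_channel_of_masks {n : ℕ} {p : ℝ} (hp : 0 ≤ p) {P : Finset (List Bool)}
    (hlen : ∀ x ∈ P, x.length = n) (M : List Bool → ℕ → Bool)
    (hcons : ∀ x ∈ P, ∀ y ∈ P, ∀ i < n, x.take (i + 1) = y.take (i + 1) → M x i = M y i)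
    (hdel : ∀ x ∈ P, ((n : ℝ) - (masked (M x) x).length) ≤ p * n) :
    ∃ f : List Bool → Bool, deletesAtMost f n p ∧
      ∀ x ∈ P, onlineOutput f x = masked (M x) x := by
  let f : List Bool → Bool := fun w =>
    !decide (∃ x ∈ P, x.take w.length = w ∧ M x (w.length - 1) = false)
  have hf : ∀ y : List Bool, y.length = n → ∀ i < n, (f (y.take (i + 1)) = false ↔
      ∃ x ∈ P, x.take (i + 1) = y.take (i + 1) ∧ M x i = false) := by
    intro y hy i hi
    have : (y.take (i + 1)).length = i + 1 := by rw [List.length_take]; omega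
    simp [f, this]
  refine ⟨f, ?_, ?_⟩
  · intro y hy
    rw [onlineOutput_eq_masked]
    have hlenD := length_masked_add (fun i => f (y.take (i + 1))) y
    rw [hy] at hlenD
    set D := (Finset.range n).filter (fun i => f (y.take (i + 1)) = false) with hD
    have hn : n - (masked (fun i => f (y.take (i + 1))) y).length = D.card := by omega
    rw [hn]
    rcases D.eq_empty_or_nonempty with h0 | hne
    · rw [h0]; simp; positivity
    · have hmax := D.max'_mem hne
      set k := D.max' hne
      rw [hD, Finset.mem_filter, Finset.mem_range] at hmax
      obtain ⟨x, hx, hxy, -⟩ := (hf y hy k hmax.1).1 hmax.2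
      have hsub : D ⊆ (Finset.range n).filter (fun i => M x i = false) := by
        intro j hj
        have hjk : j ≤ k := D.le_max' j hj
        rw [hD, Finset.mem_filter, Finset.mem_range] at hj
        obtain ⟨x', hx', hxy', hM⟩ := (hf y hy j hj.1).1 hj.2
        rw [Finset.mem_filter, Finset.mem_range]
        refine ⟨hj.1, ?_⟩
        rw [hcons x hx x' hx' j hj.1, hM]
        rw [hxy']
        have := congrArg (List.take (j + 1)) hxy
        simpa [List.take_take, Nat.min_eq_left (Nat.succ_le_succ hjk)] using this
      have h1 := Finset.card_le_card hsub
      have h2 := length_masked_add (M x) x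
      rw [hlen x hx] at h2
      have h3 := hdel x hx
      have h4 : ((masked (M x) x).length : ℝ) +
          ((Finset.range n).filter (fun i => M x i = false)).card = n := by exact_mod_cast h2
      have h5 : (D.card : ℝ) ≤ ((Finset.range n).filter (fun i => M x i = false)).card := by
        exact_mod_cast h1
      linarith
  · intro x hx
    rw [onlineOutput_eq_masked]
    apply masked_congr
    intro i hi
    rw [hlen x hx] at hi
    have h1 := hf x (hlen x hx) i hi
    cases hM : M x i
    · exact h1.2 ⟨x, hx, rfl, hM⟩
    · rw [← Bool.not_eq_false, h1]
      rintro ⟨x', hx', ht, hM'⟩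
      rw [hcons x' hx' x hx i hi ht, hM] at hM'
      exact absurd hM' (by simp)

/-! ### The adversarial threshold -/

/-- Above the threshold `p0adv`, every large code contains a pair with a long common
subsequence. -/
theorem exists_pair_of_gt_p0adv {q δ : ℝ} (hq : p0adv < q) (hq0 : 0 ≤ q) (hq1 : q ≤ 1)
    (hδ : 0 < δ) :
    ∃ n₀ : ℕ, ∀ n ≥ n₀, ∀ C : Finset (List Bool), (∀ c ∈ C, c.length = n) →
      (C.card : ℝ) ≥ 2 ^ (δ * n) → ∃ x ∈ C, ∃ y ∈ C, x ≠ y ∧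
        ∃ z : List Bool, z.Sublist x ∧ z.Sublist y ∧ (1 - q) * n ≤ z.length := by
  have hbad : ¬ advGood q := fun hg =>
    absurd (le_csSup ⟨1, fun _ h => h.1.2⟩ ⟨⟨hq0, hq1⟩, hg⟩ : q ≤ p0adv) (not_le.2 hq)
  by_contra hcon
  push Not at hcon
  exact hbad ⟨δ, hδ, hcon⟩

theorem p0adv_nonneg : 0 ≤ p0adv := Real.sSup_nonneg fun _ h => h.1.1

theorem p0adv_le_one : p0adv ≤ 1 := Real.sSup_le (fun _ h => h.1.2) zero_le_one

/-! ### The two attacks -/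

theorem masked_lt (m : ℕ) (x : List Bool) : masked (fun i => decide (i < m)) x = x.take m := by
  induction x generalizing m with
  | nil => simp [masked]
  | cons a x ih =>
    cases m with
    | zero =>
      have := ih 0
      simpa [masked_cons] using this
    | succ m => simpa [masked_cons] using ih m

/-- The channel that lets exactly the first `m` bits pass. -/
theorem onlineOutput_take (m : ℕ) (x : List Bool) :
    onlineOutput (fun w => decide (w.length ≤ m)) x = x.take m := by
  rw [onlineOutput_eq_masked, ← masked_lt]
  apply masked_congr
  intro i hi
  have : (x.take (i + 1)).length = i + 1 := by rw [List.length_take]; omega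
  simp only [this, Nat.succ_le_iff]

theorem exists_majority_s15 (u : List Bool) : ∃ b : Bool, (u.length + 1) / 2 ≤ u.count b := by
  have := List.count_true_add_count_false u
  by_contra! h
  have h1 := h true
  have h2 := h false
  omega

/-- The attack that deletes the last `⌊pn⌋` bits: it succeeds as soon as the prefixes that
remain do not identify the codewords. -/
theorem truncation_attack {n : ℕ} {p : ℝ} (hp : 0 ≤ p) {C : Finset (List Bool)}
    (hfew : 10 * (C.image (List.take (n - ⌊p * n⌋₊))).card ≤ 9 * C.card) :
    ∃ f : List Bool → Bool, deletesAtMost f n p ∧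
      ∀ Dec : List Bool → List Bool, (∀ s, Dec s ∈ C) →
        ((C.filter (fun c => Dec (onlineOutput f c) ≠ c)).card : ℝ) ≥ C.card / 10 := by
  refine ⟨fun w => decide (w.length ≤ n - ⌊p * n⌋₊), ?_, ?_⟩
  · intro x hx
    rw [onlineOutput_take, List.length_take, hx]
    have h1 : n - min (n - ⌊p * n⌋₊) n ≤ ⌊p * n⌋₊ := by omega
    exact (Nat.cast_le.2 h1).trans (Nat.floor_le (by positivity))
  · intro Dec _
    have h := errors_lower_bound (onlineOutput fun w => decide (w.length ≤ n - ⌊p * n⌋₊)) Dec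
      (subset_refl C)
    have himg : C.image (onlineOutput fun w => decide (w.length ≤ n - ⌊p * n⌋₊)) =
        C.image (List.take (n - ⌊p * n⌋₊)) := Finset.image_congr fun x _ => onlineOutput_take _ x
    rw [himg] at h
    have h2 : C.card ≤ 10 * (C.filter (fun c => Dec (onlineOutput
      (fun w => decide (w.length ≤ n - ⌊p * n⌋₊)) c) ≠ c)).card := by omega
    have h3 := (Nat.cast_le (α := ℝ)).2 h2
    push_cast at h3
    linarith

/-- The attack on codewords identified by their first `m` bits: keep `⌈m/2⌉` copies of the
majority bit `b` from the prefix and then a subsequence of the rest that is shared with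
another codeword. -/
theorem majority_attack {n m : ℕ} {p : ℝ} (hp : 0 ≤ p) (hm : m ≤ n) (b : Bool)
    {C P : Finset (List Bool)} (hC : ∀ c ∈ C, c.length = n) (hPC : P ⊆ C)
    (huniq : ∀ x ∈ P, ∀ y ∈ P, x.take m = y.take m → x = y)
    (hmaj : ∀ x ∈ P, (m + 1) / 2 ≤ (x.take m).count b)
    (z : List Bool → List Bool) (hz : ∀ x ∈ P, (z x).Sublist (x.drop m))
    (hlen : ∀ x ∈ P, (n : ℝ) - ((m + 1) / 2 : ℕ) - (z x).length ≤ p * n)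
    (himg : 2 * (P.image z).card ≤ P.card) (hbig : C.card ≤ 5 * P.card) :
    ∃ f : List Bool → Bool, deletesAtMost f n p ∧
      ∀ Dec : List Bool → List Bool, (∀ s, Dec s ∈ C) →
        ((C.filter (fun c => Dec (onlineOutput f c) ≠ c)).card : ℝ) ≥ C.card / 10 := by
  have hmask : ∀ x : List Bool, ∃ g : ℕ → Bool, x ∈ P → masked g (x.drop m) = z x := by
    intro x
    by_cases hx : x ∈ P
    · obtain ⟨g, hg⟩ := exists_mask_of_sublist (hz x hx)
      exact ⟨g, fun _ => hg⟩
    · exact ⟨fun _ => true, fun h => absurd h hx⟩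
  choose G hG using hmask
  let M : List Bool → ℕ → Bool := fun x i =>
    if i < m then keepFirst b ((m + 1) / 2) x i else G x (i - m)
  have hout : ∀ x ∈ P, masked (M x) x = List.replicate ((m + 1) / 2) b ++ z x := by
    intro x hx
    have hl : (x.take m).length = m := by
      rw [List.length_take, hC x (hPC hx)]; omega
    have h1 : masked (M x) (x.take m) = List.replicate ((m + 1) / 2) b := by
      have : masked (M x) (x.take m) =
          masked (keepFirst b ((m + 1) / 2) (x.take m)) (x.take m) := by
        apply masked_congr
        intro i hi
        rw [hl] at hi
        simp only [M, hi, if_true]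
        apply keepFirst_congr
        rw [List.take_take, Nat.min_eq_left (Nat.succ_le_of_lt hi)]
      rw [this, masked_keepFirst, Nat.min_eq_left (hmaj x hx)]
    have h2 : masked (fun i => M x ((x.take m).length + i)) (x.drop m) = z x := by
      rw [← hG x hx]
      apply masked_congr
      intro i _
      simp [M, hl]
    rw [← h1, ← h2, ← masked_append, List.take_append_drop]
  obtain ⟨f, hf, hfP⟩ := exists_channel_of_masks (n := n) hp (fun x hx => hC x (hPC hx)) M
    (by
      intro x hx y hy i hi hxy
      by_cases him : i < m
      · simp only [M, him, if_true]
        exact keepFirst_congr _ _ hxy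
      · -- The first `m` bits already identify the codeword.
        have : x = y := by
          apply huniq x hx y hy
          have := congrArg (List.take m) hxy
          simpa [List.take_take, Nat.min_eq_left (show m ≤ i + 1 by omega)] using this
        rw [this])
    (by
      intro x hx
      rw [hout x hx, List.length_append, List.length_replicate]
      have := hlen x hx
      push_cast at this ⊢
      linarith)
  refine ⟨f, hf, fun Dec _ => ?_⟩
  have h := errors_lower_bound (onlineOutput f) Dec hPC
  have himg' : (P.image (onlineOutput f)).card ≤ (P.image z).card := by
    have : P.image (onlineOutput f) =
        (P.image z).image (fun w => List.replicate ((m + 1) / 2) b ++ w) := by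
      rw [Finset.image_image]
      exact Finset.image_congr fun x hx => (hfP x hx).trans (hout x hx)
    rw [this]
    exact Finset.card_image_le
  have h2 : C.card ≤ 10 * (C.filter (fun c => Dec (onlineOutput f c) ≠ c)).card := by omega
  have h3 := (Nat.cast_le (α := ℝ)).2 h2
  push_cast at h3
  linarith

/-- For every `p > 1/(3 − 2·p0_adv)` and `R > 0`, for all sufficiently large `n` and
every code `C ⊆ {0,1}^n` with `|C| ≥ 2^{Rn}`, there is a deterministic online deletion
channel deleting at most `pn` bits on every input such that every decoder into `C`
misdecodes at least `|C|/10` codewords. -/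
theorem online_channel_defeats_large_codes (p R : ℝ)
    (hp : p > 1 / (3 - 2 * p0adv)) (hR : 0 < R) :
    ∃ n₀ : ℕ, ∀ n ≥ n₀, ∀ C : Finset (List Bool), (∀ c ∈ C, c.length = n) →
      (C.card : ℝ) ≥ 2 ^ (R * n) →
      ∃ f : List Bool → Bool, deletesAtMost f n p ∧
        ∀ Dec : List Bool → List Bool, (∀ s, Dec s ∈ C) →
          ((C.filter (fun c => Dec (onlineOutput f c) ≠ c)).card : ℝ) ≥ C.card / 10 := by
  have hp0 := p0adv_nonneg
  have hp1 := p0adv_le_one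
  have hppos : 0 < p := lt_trans (by apply one_div_pos.2; linarith) hp
  -- Codes with at least two codewords, all sharing the empty prefix, fall to truncation.
  by_cases hpge : 1 ≤ p
  · refine ⟨⌈1 / R⌉₊, fun n hn C hC hcard => truncation_attack hppos.le ?_⟩
    have hRn : 1 ≤ R * n := by
      have := (Nat.ceil_le.1 hn)
      rw [div_le_iff₀ hR] at this
      linarith
    have h2 : (2 : ℝ) ≤ C.card := by
      refine le_trans ?_ hcard
      simpa using Real.rpow_le_rpow_of_exponent_le (by norm_num : (1 : ℝ) ≤ 2) hRn
    have h2' : 2 ≤ C.card := by exact_mod_cast h2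
    have hfl : n ≤ ⌊p * n⌋₊ := Nat.le_floor (by nlinarith [Nat.cast_nonneg (α := ℝ) n])
    have h1 : (C.image (List.take (n - ⌊p * n⌋₊))).card ≤ 1 := by
      rw [Finset.card_le_one]
      simp only [Nat.sub_eq_zero_of_le hfl, List.take_zero, Finset.mem_image]
      rintro _ ⟨_, _, rfl⟩ _ ⟨_, _, rfl⟩
      rfl
    omega
  push Not at hpge
  -- A value `q` slightly above `p0adv` that keeps the strict inequality `p (3 - 2q) > 1`.
  obtain ⟨q, hq, hq1, hpq⟩ : ∃ q, p0adv < q ∧ q ≤ 1 ∧ 1 < p * (3 - 2 * q) := by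
    have h3 : 1 < p * (3 - 2 * p0adv) := by
      rwa [gt_iff_lt, div_lt_iff₀ (by linarith)] at hp
    refine ⟨p0adv + (p * (3 - 2 * p0adv) - 1) / 4, by linarith, ?_, ?_⟩
    · nlinarith
    · nlinarith
  have hq0 : 0 ≤ q := hp0.trans hq.le
  obtain ⟨s₀, hs₀⟩ := exists_pair_of_gt_p0adv hq hq0 hq1 (half_pos hR)
  obtain ⟨n₁, hn₁⟩ := exists_nat_ge ((s₀ + 1) / p)
  obtain ⟨n₂, hn₂⟩ := exists_nat_ge (6 / R)
  obtain ⟨n₃, hn₃⟩ := exists_nat_ge (1 / (p * (3 - 2 * q) - 1))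
  refine ⟨max n₁ (max n₂ n₃), fun n hn C hC hcard => ?_⟩
  have hn1 : (s₀ : ℝ) + 1 ≤ p * n := by
    have h : (n₁ : ℝ) ≤ n := by exact_mod_cast (le_max_left _ _).trans hn
    have := hn₁.trans h
    rw [div_le_iff₀ hppos] at this
    linarith
  have hn2 : 6 ≤ R * n := by
    have h : (n₂ : ℝ) ≤ n := by
      exact_mod_cast ((le_max_left _ _).trans (le_max_right _ _)).trans hn
    have := hn₂.trans h
    rw [div_le_iff₀ hR] at this
    linarith
  have hn3 : 1 ≤ (p * (3 - 2 * q) - 1) * n := by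
    have h : (n₃ : ℝ) ≤ n := by
      exact_mod_cast ((le_max_right _ _).trans (le_max_right _ _)).trans hn
    have := hn₃.trans h
    rw [div_le_iff₀ (by linarith)] at this
    linarith
  by_cases hfew : 10 * (C.image (List.take (n - ⌊p * n⌋₊))).card ≤ 9 * C.card
  · exact truncation_attack hppos.le hfew
  push Not at hfew
  set s := ⌊p * n⌋₊ with hs
  set m := n - s with hm
  have hn0 : (0 : ℝ) ≤ n := Nat.cast_nonneg n
  have hs_le : (s : ℝ) ≤ p * n := Nat.floor_le (by positivity)
  have hs_gt : p * n < s + 1 := Nat.lt_floor_add_one _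
  have hsn : s ≤ n := by
    have : (s : ℝ) ≤ n := by nlinarith
    exact_mod_cast this
  have hms : (m : ℝ) + s = n := by
    have : m + s = n := by omega
    exact_mod_cast this
  have hss₀ : s₀ ≤ s := Nat.le_floor (by linarith)
  -- At least `4/5` of the codewords are identified by their first `m` bits.
  have hU := two_mul_card_image_le (List.take m) C
  set U := C.filter (fun x => ∀ y ∈ C, y.take m = x.take m → y = x) with hUdef
  have hUbig : 4 * C.card ≤ 5 * U.card := by omega
  have hUC : U ⊆ C := Finset.filter_subset _ _
  -- At least half of those share a majority bit in that prefix.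
  obtain ⟨b, hb⟩ : ∃ b : Bool,
      U.card ≤ 2 * (U.filter (fun x => (m + 1) / 2 ≤ (x.take m).count b)).card := by
    by_contra! hcon
    have hcov : U ⊆ U.filter (fun x => (m + 1) / 2 ≤ (x.take m).count true) ∪
        U.filter (fun x => (m + 1) / 2 ≤ (x.take m).count false) := by
      intro x hx
      have hl : (x.take m).length = m := by
        rw [List.length_take, hC x (hUC hx)]; omega
      obtain ⟨b, hb⟩ := exists_majority_s15 (x.take m)
      rw [hl] at hb
      cases b
      · exact Finset.mem_union_right _ (Finset.mem_filter.2 ⟨hx, hb⟩)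
      · exact Finset.mem_union_left _ (Finset.mem_filter.2 ⟨hx, hb⟩)
    have h1 := (Finset.card_le_card hcov).trans (Finset.card_union_le _ _)
    have h2 := hcon true
    have h3 := hcon false
    omega
  set S := U.filter (fun x => (m + 1) / 2 ≤ (x.take m).count b) with hSdef
  have hSU : S ⊆ U := Finset.filter_subset _ _
  obtain ⟨P, hPS, z, hz, himg, hPbig⟩ := exists_greedy_pairing
    (fun (x z : List Bool) => z.Sublist (x.drop m) ∧ (1 - q) * s ≤ z.length)
    ((2 : ℝ) ^ (R / 2 * s)) S (by
      intro S' hS' hK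
      have hlen : ∀ x ∈ S', (x.drop m).length = s := by
        intro x hx
        rw [List.length_drop, hC x (hUC (hSU (hS' hx)))]; omega
      by_cases hinj : Set.InjOn (List.drop m) (S' : Set (List Bool))
      · obtain ⟨x, hx, y, hy, hxy, w, hwx, hwy, hw⟩ := hs₀ s hss₀ (S'.image (List.drop m))
          (by
            intro c hc
            obtain ⟨x, hx, rfl⟩ := Finset.mem_image.1 hc
            exact hlen x hx)
          (by rw [Finset.card_image_of_injOn hinj]; exact hK)
        obtain ⟨x, hxS, rfl⟩ := Finset.mem_image.1 hx
        obtain ⟨y, hyS, rfl⟩ := Finset.mem_image.1 hy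
        exact ⟨x, hxS, y, hyS, fun h => hxy (by rw [h]), w, ⟨hwx, hw⟩, ⟨hwy, hw⟩⟩
      · -- Two codewords with the same suffix share all of it.
        simp only [Set.InjOn] at hinj
        push Not at hinj
        obtain ⟨x, hx, y, hy, hd, hne⟩ := hinj
        have hw : (1 - q) * s ≤ (x.drop m).length := by
          rw [hlen x hx]; nlinarith [Nat.cast_nonneg (α := ℝ) s]
        exact ⟨x, hx, y, hy, hne, x.drop m, ⟨List.Sublist.refl _, hw⟩,
          ⟨hd ▸ List.Sublist.refl _, hw⟩⟩)
  -- The fewer than `2^{Rs/2}` unpaired codewords are at most `|C|/5` in number.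
  have hKsmall : 5 * (2 : ℝ) ^ (R / 2 * s) ≤ C.card := by
    have h1 : (2 : ℝ) ^ (R / 2 * s) ≤ 2 ^ (R / 2 * n) := by
      apply Real.rpow_le_rpow_of_exponent_le (by norm_num)
      have : (s : ℝ) ≤ n := by exact_mod_cast hsn
      nlinarith
    have h2 : (2 : ℝ) ^ (R * n) = 2 ^ (R / 2 * n) * 2 ^ (R / 2 * n) := by
      rw [← Real.rpow_add (by norm_num)]; congr 1; ring
    have h3 : (8 : ℝ) ≤ 2 ^ (R / 2 * n) := by
      have : (2 : ℝ) ^ (3 : ℝ) ≤ 2 ^ (R / 2 * n) :=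
        Real.rpow_le_rpow_of_exponent_le (by norm_num) (by linarith)
      norm_num at this ⊢
      exact this
    nlinarith
  refine majority_attack hppos.le (by omega) b hC (hPS.trans (hSU.trans hUC)) ?_ ?_ z
    (fun x hx => (hz x hx).1) ?_ himg ?_
  · intro x hx y hy hxy
    exact (Finset.mem_filter.1 (hSU (hPS hy))).2 x (hUC (hSU (hPS hx))) hxy
  · exact fun x hx => (Finset.mem_filter.1 (hPS hx)).2
  · intro x hx
    have h1 := (hz x hx).2
    have h2 : (m : ℝ) ≤ 2 * ((m + 1) / 2 : ℕ) := by
      have : m ≤ 2 * ((m + 1) / 2) := by omega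
      exact_mod_cast this
    -- At most `m/2 + qs` bits are deleted, where `m ≤ (1-p)n + 1` and `s ≤ pn`.
    have h3 : q * s ≤ q * (p * n) := mul_le_mul_of_nonneg_left hs_le hq0
    nlinarith
  · have h1 : (4 : ℝ) * C.card ≤ 10 * S.card := by
      have : 4 * C.card ≤ 10 * S.card := by omega
      exact_mod_cast this
    have h2 : (C.card : ℝ) ≤ 5 * P.card := by linarith
    exact_mod_cast h2
end

section
/- For every R > 0 and every p with p0_adv < p ≤ 1, there exists n₀ such that for all n ≥ n₀ and every code C ⊆ {0,1}^n with |C| ≥ 2^{Rn}, there exists a subset C' ⊆ C with |C'| ≥ |C| − 2^{Rn/2} such that every x ∈ C' is confusable with another codeword of C: for every x ∈ C' there exists y ∈ C with y ≠ x and LCS(x,y) > (1−p)n. -/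
/-! Any `q` strictly between `p0adv` and `p` lies in `[0, 1]` above the supremum, so `q` is not
`advGood`: for large `n`, every code of length `n` whose distinct codewords have all common
subsequences shorter than `(1 - q) n` has fewer than `2 ^ (R n / 2)` elements. The codewords of
`C` confusable with no other codeword form such a code, since `(1 - p) n < (1 - q) n`; removing
them from `C` gives `C'`. -/

open scoped Classical

/-- For every `R > 0` and `p0_adv < p ≤ 1`, for all sufficiently large `n` and every
code `C ⊆ {0,1}^n` with `|C| ≥ 2^{Rn}`, all but at most `2^{Rn/2}` codewords are
confusable with another codeword of `C` (i.e., have a common subsequence with it of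
length more than `(1−p)n`). -/
theorem almost_all_codewords_confusable (R p : ℝ) (hR : 0 < R)
    (hp1 : p0adv < p) (hp2 : p ≤ 1) :
    ∃ n₀ : ℕ, ∀ n ≥ n₀, ∀ C : Finset (List Bool), (∀ c ∈ C, c.length = n) →
      (C.card : ℝ) ≥ 2 ^ (R * n) →
      ∃ C' ⊆ C, ((C'.card : ℝ) ≥ (C.card : ℝ) - 2 ^ (R * n / 2)) ∧
        ∀ x ∈ C', ∃ y ∈ C, y ≠ x ∧
          ∃ z : List Bool, z.Sublist x ∧ z.Sublist y ∧ (1 - p) * n < (z.length : ℝ) := by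
  -- The supremum is nonnegative, also for the empty set, where `sSup ∅ = 0`.
  have h0 : 0 ≤ p0adv := Real.sSup_nonneg fun x hx => hx.1.1
  obtain ⟨q, hq1, hq2⟩ := exists_between hp1
  have hq : ¬ advGood q := fun h => by
    have hle : q ≤ p0adv := le_csSup ⟨1, fun x hx => hx.1.2⟩ ⟨⟨by linarith, by linarith⟩, h⟩
    linarith
  unfold advGood at hq
  push Not at hq
  obtain ⟨n₀, hn₀⟩ := hq (R / 2) (by linarith)
  -- Positivity of `n` makes `(1 - p) * n < (1 - q) * n` strict.
  refine ⟨n₀ + 1, fun n hn C hC _ => ?_⟩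
  let P : List Bool → Prop := fun x => ∃ y ∈ C, y ≠ x ∧
    ∃ z : List Bool, z.Sublist x ∧ z.Sublist y ∧ (1 - p) * n < (z.length : ℝ)
  refine ⟨C.filter P, Finset.filter_subset _ _, ?_, fun x hx => (Finset.mem_filter.1 hx).2⟩
  have hcard : ((C.filter P).card : ℝ) + ((C.filter fun x => ¬ P x).card : ℝ) = C.card := by
    exact_mod_cast Finset.card_filter_add_card_filter_not (s := C) P
  by_contra hlt
  have hbig : ((C.filter fun x => ¬ P x).card : ℝ) ≥ 2 ^ (R / 2 * n) := by
    rw [show R / 2 * (n : ℝ) = R * n / 2 by ring]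
    linarith
  obtain ⟨x, hx, y, hy, hxy, z, hzx, hzy, hz⟩ := hn₀ n (by omega) (C.filter fun x => ¬ P x)
    (fun c hc => hC c (Finset.mem_filter.1 hc).1) hbig
  have hnpos : (0 : ℝ) < n := by exact_mod_cast (by omega : 0 < n)
  refine (Finset.mem_filter.1 hx).2
    ⟨y, (Finset.mem_filter.1 hy).1, hxy.symm, z, hzx, hzy, lt_of_lt_of_le ?_ hz⟩
  exact mul_lt_mul_of_pos_right (by linarith) hnpos
end

section
/- Let λ ≥ 1 be an integer and let K be an integer with K ≥ 2^{2^{λ+5}}. Then (λ−1)/K + (1/K)·Σ_{j=λ}^{K} Σ_{k=1}^{2K²} (1 − j/K)^{k−1} ≥ (log₂ K)/4. -/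
/-!
For `1 ≤ j ≤ K` the truncated geometric sum `∑_{k<n} (1 - j/K)^k` equals
`(1 - (1 - j/K)^n) * K/j`. With `n = 2K²` the tail `(1 - j/K)^n ≤ exp (-2Kj)` is at most `1/2`,
so the inner sum is at least `K/(2j)` (`half_le_inner_sum`). Comparing the harmonic sum with the
logarithm (`log_sub_log_le_sum_inv`), the left-hand side is at least `(log K - log λ)/2`.
The size hypothesis gives `32 log λ ≤ log K` (`log_lam_le`), and `(31/64) log K` exceeds
`log K / (4 log 2)` because `log 2 > 16/31`.
-/

theorem log_sub_log_le_sum_inv (a : ℕ) (ha : 1 ≤ a) (n : ℕ) (hn : a ≤ n) :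
    Real.log ((n : ℝ) + 1) - Real.log a ≤ ∑ j ∈ Finset.Icc a n, (1 / (j : ℝ)) := by
  have step : ∀ m : ℕ, 1 ≤ m → Real.log ((m : ℝ) + 1) - Real.log m ≤ 1 / (m : ℝ) := by
    intro m hm
    have hm0 : (0 : ℝ) < m := by exact_mod_cast hm
    rw [← Real.log_div (by positivity) hm0.ne']
    refine (Real.log_le_sub_one_of_pos (by positivity)).trans (le_of_eq ?_)
    field_simp
    ring
  induction n, hn using Nat.le_induction with
  | base => simpa using step a ha
  | succ n hn ih =>
    rw [Finset.sum_Icc_succ_top (by omega)]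
    have := step (n + 1) (by omega)
    push_cast at this ⊢
    linarith

theorem half_le_inner_sum (K j : ℕ) (hj : 1 ≤ j) (hjK : j ≤ K) :
    (K : ℝ) / 2 * (1 / j) ≤
      ∑ k ∈ Finset.Icc 1 (2 * K ^ 2), (1 - (j : ℝ) / K) ^ (k - 1) := by
  have hj1 : (1 : ℝ) ≤ j := by exact_mod_cast hj
  have hjK' : (j : ℝ) ≤ K := by exact_mod_cast hjK
  have hK0 : (0 : ℝ) < K := by linarith
  have hsum : ∑ k ∈ Finset.Icc 1 (2 * K ^ 2), (1 - (j : ℝ) / K) ^ (k - 1)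
      = ∑ k ∈ Finset.range (2 * K ^ 2), (1 - (j : ℝ) / K) ^ k := by
    rw [Finset.range_eq_Ico, ← Finset.Ico_add_one_right_eq_Icc,
      Finset.sum_Ico_eq_sum_range, Finset.range_eq_Ico]
    simp
  have hgeom := mul_neg_geom_sum (1 - (j : ℝ) / K) (2 * K ^ 2)
  have htail : (1 - (j : ℝ) / K) ^ (2 * K ^ 2) ≤ 1 / 2 := by
    have h0 : 0 ≤ 1 - (j : ℝ) / K := by
      rw [sub_nonneg, div_le_one hK0]
      exact hjK'
    have h1 : (1 - (j : ℝ) / K) ^ (2 * K ^ 2) ≤ Real.exp (-((j : ℝ) / K)) ^ (2 * K ^ 2) :=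
      pow_le_pow_left₀ h0 (Real.one_sub_le_exp_neg _) _
    have h2 : Real.exp (-((j : ℝ) / K)) ^ (2 * K ^ 2) = (Real.exp (2 * K * j))⁻¹ := by
      rw [← Real.exp_nat_mul, ← Real.exp_neg]
      congr 1
      push_cast
      field_simp
    have h3 : (2 : ℝ) ≤ Real.exp (2 * K * j) := by
      have := Real.add_one_le_exp (2 * (K : ℝ) * j)
      nlinarith
    rw [h2] at h1
    refine h1.trans ?_
    rw [one_div]
    exact inv_anti₀ (by norm_num) h3
  rw [hsum]
  set S := ∑ k ∈ Finset.range (2 * K ^ 2), (1 - (j : ℝ) / K) ^ k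
  have hS : (1 : ℝ) / 2 ≤ (j : ℝ) / K * S := by
    have : (1 - (1 - (j : ℝ) / K)) = (j : ℝ) / K := by ring
    rw [this] at hgeom
    linarith
  calc (K : ℝ) / 2 * (1 / j) = (K : ℝ) / j * (1 / 2) := by ring
    _ ≤ (K : ℝ) / j * ((j : ℝ) / K * S) := by gcongr
    _ = S := by field_simp

theorem log_lam_le (lam K : ℕ) (hlam : 1 ≤ lam) (hK : 2 ^ 2 ^ (lam + 5) ≤ K) :
    32 * Real.log lam ≤ Real.log K := by
  have h : lam ^ 32 ≤ K := by
    calc lam ^ 32 ≤ (2 ^ lam) ^ 32 := Nat.pow_le_pow_left Nat.lt_two_pow_self.le _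
      _ = 2 ^ (lam * 32) := (pow_mul _ _ _).symm
      _ ≤ 2 ^ 2 ^ (lam + 5) := by
        apply Nat.pow_le_pow_right (by norm_num)
        have := (Nat.lt_two_pow_self (n := lam)).le
        rw [pow_add]
        omega
      _ ≤ K := hK
  have h' : (lam : ℝ) ^ 32 ≤ K := by exact_mod_cast h
  have hpos : (0 : ℝ) < lam := by exact_mod_cast hlam
  have := Real.log_le_log (by positivity) h'
  rw [Real.log_pow] at this
  exact_mod_cast this

/-- For `λ ≥ 1` and `K ≥ 2^{2^{λ+5}}`:
`(λ−1)/K + (1/K)·Σ_{j=λ}^{K} Σ_{k=1}^{2K²} (1 − j/K)^{k−1} ≥ (log₂ K)/4`.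
The left-hand side is the expectation of `D`, where `J` is uniform on `{1,…,K}`,
`D = 1` if `J ≤ λ−1`, and otherwise `D = min(Z, 2K²)` for `Z` geometric with success
probability `J/K`; `2K² = √R` for `R = 4K⁴`. -/
theorem expected_span_lb (lam K : ℕ) (hlam : 1 ≤ lam) (hK : 2 ^ 2 ^ (lam + 5) ≤ K) :
    Real.logb 2 K / 4 ≤
      ((lam : ℝ) - 1) / K +
        (1 / K) * ∑ j ∈ Finset.Icc lam K,
          ∑ k ∈ Finset.Icc 1 (2 * K ^ 2), (1 - (j : ℝ) / K) ^ (k - 1) := by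
  have hlt : lam ≤ K := by
    have h1 := (Nat.lt_two_pow_self (n := lam + 5)).le
    have h2 := (Nat.lt_two_pow_self (n := 2 ^ (lam + 5))).le
    omega
  have hlam1 : (1 : ℝ) ≤ lam := by exact_mod_cast hlam
  have hK1 : (1 : ℝ) ≤ K := by exact_mod_cast hlam.trans hlt
  have hK0 : (0 : ℝ) < K := by linarith
  have hharm := log_sub_log_le_sum_inv lam hlam K hlt
  have hlogmono : Real.log K ≤ Real.log ((K : ℝ) + 1) :=
    Real.log_le_log hK0 (by linarith)
  have hlog := log_lam_le lam K hlam hK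
  have hlogK : 0 ≤ Real.log K := Real.log_nonneg hK1
  have hdouble : (K : ℝ) / 2 * ∑ j ∈ Finset.Icc lam K, (1 / (j : ℝ)) ≤
      ∑ j ∈ Finset.Icc lam K,
        ∑ k ∈ Finset.Icc 1 (2 * K ^ 2), (1 - (j : ℝ) / K) ^ (k - 1) := by
    rw [Finset.mul_sum]
    refine Finset.sum_le_sum fun j hj => ?_
    rw [Finset.mem_Icc] at hj
    exact half_le_inner_sum K j (hlam.trans hj.1) hj.2
  have hfirst : 0 ≤ ((lam : ℝ) - 1) / K := div_nonneg (by linarith) hK0.le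
  have hmain : Real.logb 2 K / 4 ≤ 31 / 64 * Real.log K := by
    have hlog2 := Real.log_two_gt_d9
    rw [Real.logb, div_div, div_le_iff₀ (by positivity)]
    nlinarith
  calc Real.logb 2 K / 4 ≤ 31 / 64 * Real.log K := hmain
    _ ≤ 1 / 2 * ∑ j ∈ Finset.Icc lam K, (1 / (j : ℝ)) := by linarith
    _ = 1 / K * ((K : ℝ) / 2 * ∑ j ∈ Finset.Icc lam K, (1 / (j : ℝ))) := by field_simp
    _ ≤ 1 / K * ∑ j ∈ Finset.Icc lam K,
        ∑ k ∈ Finset.Icc 1 (2 * K ^ 2), (1 - (j : ℝ) / K) ^ (k - 1) := by gcongr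
    _ ≤ _ := le_add_of_nonneg_left hfirst
end
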